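/- arXiv:0902.3845 — 2 statements merged into one kernel-verified Lean document; each statement's English description precedes it below -/
import Mathlib

section
/- For every positive integer n, the alternating group A_n possesses a 2-basic set. -/
open scoped Classical

/-- `f : G → ℂ` is an irreducible complex character of `G`. -/
def IsIrrChar (G : Type) [Group G] (f : G → ℂ) : Prop :=
  ∃ V : FDRep ℂ G, CategoryTheory.Simple V ∧ FDRep.character V = f

/-- Restriction of a function to 2-regular (odd order) elements, extended by zero. -/
noncomputable def twoReg {G : Type*} [Monoid G] (f : G → ℂ) : G → ℂ :=
  fun g => if Odd (orderOf g) then f g else 0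

/-- `B` is a 2-basic set of `G`: the restrictions to 2-regular elements of the members of `B`
are `ℤ`-linearly independent and span the same `ℤ`-module as the restrictions to 2-regular
elements of all irreducible characters. -/
def IsTwoBasicSet (G : Type) [Group G] (B : Set (G → ℂ)) : Prop :=
  B ⊆ {f | IsIrrChar G f} ∧
  LinearIndependent ℤ (fun f : B => twoReg (f : G → ℂ)) ∧
  Submodule.span ℤ (twoReg '' B) = Submodule.span ℤ (twoReg '' {f | IsIrrChar G f})

/-!
In the symmetric group, the characters labelled by the partitions into distinct parts form a
2-basic set. The permutation character on the row tabloids of a partition contains the character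
labelled by it once, and its other constituents have more dominant labels. If two rows `a`, `b`
have the same length, then flipping the colours `a` and `b` on one cycle of a permutation of odd
order changes the parity of the number of points coloured `a`. Hence the permutation characters
obtained by redistributing the two rows have vanishing alternating sum on 2-regular elements, which
expresses the character in question through those with more dominant labels. So the characters with
distinct parts span, and by Euler's theorem there are as many of them as 2-regular classes.

An element of even order of `A_n` has an odd permutation in its centralizer, so a combination of
irreducible characters of `A_n` that vanishes on the 2-regular elements is invariant under
conjugation by `S_n`. A 2-basic set of `A_n` therefore consists of the constituents of the
restrictions of the members of a 2-basic set of `S_n`, together with one member of every other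
pair of conjugate irreducible characters.
-/

namespace TwoBasic

section Characters

variable {G : Type} [Group G]

/-- `f` is the character of a finite-dimensional complex representation of `G`. -/
def IsChar (f : G → ℂ) : Prop := ∃ V : FDRep ℂ G, V.character = f

lemma isChar_character {V : Type} [AddCommGroup V] [Module ℂ V] [FiniteDimensional ℂ V]
    (ρ : Representation ℂ G V) : IsChar ρ.character :=
  ⟨FDRep.of ρ, rfl⟩

lemma IsChar.mul {f g : G → ℂ} (hf : IsChar f) (hg : IsChar g) : IsChar (f * g) := by
  obtain ⟨V, rfl⟩ := hf
  obtain ⟨W, rfl⟩ := hg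
  exact ⟨_, FDRep.char_tensor V W⟩

lemma IsChar.comp {H : Type} [Group H] {f : G → ℂ} (hf : IsChar f) (φ : H →* G) :
    IsChar (f ∘ φ) := by
  obtain ⟨V, rfl⟩ := hf
  exact ⟨FDRep.of (V.ρ.comp φ), rfl⟩

lemma isChar_monoidHom (χ : G →* ℂ) : IsChar χ := by
  let ρ : Representation ℂ G ℂ := (Module.toModuleEnd ℂ (S := ℂ) ℂ).toMonoidHom.comp χ
  have h : ρ.character = χ := by
    ext g
    have : ρ g = χ g • LinearMap.id := by ext; simp [ρ]
    simp [Representation.character, this]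
  exact h ▸ isChar_character ρ

lemma isChar_card_fixedPoints (X : Type) [Fintype X] [MulAction G X] :
    IsChar (fun g : G => ({x : X | g • x = x} : Finset X).card) := by
  let ρ : Representation ℂ G (X → ℂ) :=
    { toFun := fun g => LinearMap.funLeft ℂ ℂ (fun x => g⁻¹ • x)
      map_one' := by ext; simp
      map_mul' := fun g h => by
        ext f x
        simp [LinearMap.funLeft_apply, mul_smul, mul_inv_rev] }
  have h : ρ.character = fun g : G => (({x : X | g • x = x} : Finset X).card : ℂ) := by
    ext g
    rw [Representation.character, LinearMap.trace_eq_matrix_trace ℂ (Pi.basisFun ℂ X),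
      Matrix.trace, Finset.natCast_card_filter]
    refine Finset.sum_congr rfl fun x _ => ?_
    simp only [Matrix.diag_apply, LinearMap.toMatrix_apply, Pi.basisFun_repr, Pi.basisFun_apply,
      ρ, MonoidHom.coe_mk, OneHom.coe_mk, LinearMap.funLeft_apply, Pi.single_apply,
      inv_smul_eq_iff]
    exact if_congr eq_comm rfl rfl
  exact h ▸ isChar_character ρ

lemma _root_.IsIrrChar.isChar {f : G → ℂ} (hf : IsIrrChar G f) : IsChar f := by
  obtain ⟨V, _, h⟩ := hf
  exact ⟨V, h⟩

variable (G) in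
/-- The space of class functions on `G`. -/
def classFunctions : Submodule ℂ (G → ℂ) where
  carrier := {f | ∀ g x, f (g * x * g⁻¹) = f x}
  zero_mem' _ _ := rfl
  add_mem' hf hg g x := congrArg₂ (· + ·) (hf g x) (hg g x)
  smul_mem' c _ hf g x := congrArg (c * ·) (hf g x)

lemma IsChar.mem_classFunctions {f : G → ℂ} (hf : IsChar f) : f ∈ classFunctions G := by
  obtain ⟨V, rfl⟩ := hf
  exact fun g x => V.char_conj x g

lemma _root_.IsIrrChar.mem_classFunctions {f : G → ℂ} (hf : IsIrrChar G f) :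
    f ∈ classFunctions G :=
  hf.isChar.mem_classFunctions

lemma apply_eq_of_isConj {f : G → ℂ} (hf : f ∈ classFunctions G) {x y : G} (h : IsConj x y) :
    f x = f y := by
  obtain ⟨c, rfl⟩ := isConj_iff.1 h
  exact (hf c x).symm

variable (G) in
/-- Class functions on `G` are the functions on its conjugacy classes. -/
def conjClassesFunEquiv : (ConjClasses G → ℂ) ≃ₗ[ℂ] classFunctions G where
  toFun φ := ⟨φ ∘ ConjClasses.mk, fun g _ => congrArg φ (ConjClasses.mk_eq_mk_iff_isConj.2
    (isConj_iff.2 ⟨g, rfl⟩).symm)⟩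
  map_add' _ _ := rfl
  map_smul' _ _ := rfl
  invFun f := Quotient.lift f.1 fun _ _ => apply_eq_of_isConj f.2
  left_inv _ := funext fun c => Quotient.inductionOn c fun _ => rfl
  right_inv _ := rfl

section InnerProduct

variable [Fintype G]

/-- The bilinear form `⟨f, g⟩ = |G|⁻¹ ∑ x, f x * g x⁻¹`; on characters it is the usual Hermitian
inner product, since there `g x⁻¹` is the complex conjugate of `g x`. -/
noncomputable def cinner : (G → ℂ) →ₗ[ℂ] (G → ℂ) →ₗ[ℂ] ℂ :=
  LinearMap.mk₂ ℂ (fun f g => (Nat.card G : ℂ)⁻¹ * ∑ x, f x * g x⁻¹)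
    (fun _ _ _ => by simp only [Pi.add_apply, add_mul, Finset.sum_add_distrib, mul_add])
    (fun _ _ _ => by
      simp only [Pi.smul_apply, smul_eq_mul, Finset.mul_sum, mul_assoc, mul_left_comm])
    (fun _ _ _ => by simp only [Pi.add_apply, mul_add, Finset.sum_add_distrib])
    (fun _ _ _ => by simp only [Pi.smul_apply, smul_eq_mul, Finset.mul_sum, mul_left_comm])

lemma cinner_apply (f g : G → ℂ) :
    cinner f g = (Nat.card G : ℂ)⁻¹ * ∑ x, f x * g x⁻¹ := rfl

lemma cinner_comm (f g : G → ℂ) : cinner f g = cinner g f := by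
  rw [cinner_apply, cinner_apply]
  congr 1
  refine Fintype.sum_equiv (Equiv.inv G) _ _ fun x => ?_
  simp [mul_comm]

lemma cinner_comp_mulEquiv (f g : G → ℂ) (φ : G ≃* G) :
    cinner (f ∘ φ) (g ∘ φ) = cinner f g := by
  rw [cinner_apply, cinner_apply]
  congr 1
  exact Fintype.sum_equiv φ.toEquiv _ _ fun x => by simp

lemma isIrrChar_iff {f : G → ℂ} : IsIrrChar G f ↔ IsChar f ∧ cinner f f = 1 := by
  have hG : (Nat.card G : ℂ) ≠ 0 := by simp
  constructor
  · intro h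
    refine ⟨h.isChar, ?_⟩
    obtain ⟨V, hV, rfl⟩ := h
    rw [FDRep.simple_iff_char_is_norm_one] at hV
    rw [cinner_apply, hV, inv_mul_cancel₀ hG]
  · rintro ⟨⟨V, rfl⟩, h⟩
    refine ⟨V, ?_, rfl⟩
    rw [FDRep.simple_iff_char_is_norm_one]
    rwa [cinner_apply, inv_mul_eq_one₀ hG, eq_comm] at h

lemma cinner_eq_ite_of_isIrrChar {f g : G → ℂ} (hf : IsIrrChar G f) (hg : IsIrrChar G g) :
    cinner f g = if f = g then 1 else 0 := by
  split_ifs with h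
  · subst h
    exact (isIrrChar_iff.1 hf).2
  · obtain ⟨V, hV, rfl⟩ := hf
    obtain ⟨W, hW, rfl⟩ := hg
    have : Invertible (Nat.card G : ℂ) := invertibleOfNonzero (by simp)
    rw [cinner_apply, FDRep.char_orthonormal V W, if_neg]
    rintro ⟨i⟩
    exact h (FDRep.char_iso i)

lemma IsChar.exists_cinner_eq_natCast {f g : G → ℂ} (hf : IsChar f) (hg : IsChar g) :
    ∃ m : ℕ, cinner f g = m := by
  obtain ⟨V, rfl⟩ := hf
  obtain ⟨W, rfl⟩ := hg
  have : Invertible (Nat.card G : ℂ) := invertibleOfNonzero (by simp)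
  exact ⟨_, FDRep.scalar_product_char_eq_finrank_equivariant W V⟩

end InnerProduct

section Completeness

open Representation

lemma isIrrChar_character {V : Type} [AddCommGroup V] [Module ℂ V] [FiniteDimensional ℂ V]
    [Finite G] (ρ : Representation ℂ G V) [IsIrreducible ρ] : IsIrrChar G ρ.character := by
  cases nonempty_fintype G
  have : Invertible (Nat.card G : ℂ) := invertibleOfNonzero (by simp)
  refine isIrrChar_iff.2 ⟨isChar_character ρ, ?_⟩
  rw [cinner_apply, card_inv_mul_sum_char_mul_char_eq_finrank]
  simp

lemma isIrreducible_ofModule' (S : Type*) [AddCommGroup S] [Module ℂ S]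
    [Module (MonoidAlgebra ℂ G) S] [IsScalarTower ℂ (MonoidAlgebra ℂ G) S]
    [IsSimpleModule (MonoidAlgebra ℂ G) S] : IsIrreducible (ofModule' (k := ℂ) (G := G) S) := by
  set ρ := ofModule' (k := ℂ) (G := G) S
  have hρ : ρ.asAlgebraHom = Algebra.lsmul ℂ ℂ S := (MonoidAlgebra.lift ℂ _ G).apply_symm_apply _
  let e : ρ.asModule ≃ₗ[MonoidAlgebra ℂ G] S :=
    { ρ.asModuleEquiv with map_smul' := fun r s => DFunLike.congr_fun (DFunLike.congr_fun hρ r) s }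
  exact (irreducible_iff_isSimpleModule_asModule ρ).2 (IsSimpleModule.congr e)

variable [Fintype G]

/-- By Schur's lemma the sum is a scalar, and its trace is a multiple of `cinner f ρ.character`. -/
lemma sum_smul_eq_zero_of_cinner_eq_zero {V : Type} [AddCommGroup V] [Module ℂ V]
    [FiniteDimensional ℂ V] (ρ : Representation ℂ G V) [IsIrreducible ρ] {f : G → ℂ}
    (hf : f ∈ classFunctions G) (h : cinner f ρ.character = 0) :
    ∑ x, f x • ρ x⁻¹ = 0 := by
  set T : Module.End ℂ V := ∑ x, f x • ρ x⁻¹ with hT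
  have hcomm : ∀ g, T ∘ₗ ρ g = ρ g ∘ₗ T := fun g => by
    simp only [hT, ← Module.End.mul_eq_comp, Finset.sum_mul, Finset.mul_sum, smul_mul_assoc,
      mul_smul_comm, ← map_mul]
    refine Fintype.sum_equiv (MulAut.conj g⁻¹).toEquiv _ _ fun x => ?_
    rw [MulEquiv.toEquiv_eq_coe, EquivLike.coe_coe, MulAut.conj_apply, hf g⁻¹ x]
    simp [mul_assoc]
  obtain ⟨c, hc⟩ := (IsIrreducible.algebraMap_intertwiningMap_bijective_of_isAlgClosed
    (ρ := ρ)).2 ⟨T, hcomm⟩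
  have hTc : T = c • LinearMap.id := (congrArg IntertwiningMap.toLinearMap hc).symm
  have htrace : LinearMap.trace ℂ V T = 0 := by
    simpa [cinner_apply, hT, Representation.character] using h
  have hV : (Module.finrank ℂ V : ℂ) ≠ 0 := by
    have := IsSimpleModule.nontrivial (MonoidAlgebra ℂ G) ρ.asModule
    have : Nontrivial V := this
    exact Nat.cast_ne_zero.2 Module.finrank_pos.ne'
  rw [hTc, map_smul, ← Module.End.one_eq_id, LinearMap.trace_one, smul_eq_mul] at htrace
  rw [hTc, (mul_eq_zero.1 htrace).resolve_right hV, zero_smul]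

lemma eq_zero_of_forall_cinner_eq_zero {f : G → ℂ} (hf : f ∈ classFunctions G)
    (h : ∀ ψ, IsIrrChar G ψ → cinner f ψ = 0) : f = 0 := by
  let z : MonoidAlgebra ℂ G := ∑ x, f x • MonoidAlgebra.of ℂ G x⁻¹
  have hsimple : ∀ S : Submodule (MonoidAlgebra ℂ G) (MonoidAlgebra ℂ G),
      IsSimpleModule (MonoidAlgebra ℂ G) S → z ∈ S.annihilator := by
    intro S hS
    have : FiniteDimensional ℂ S :=
      inferInstanceAs (FiniteDimensional ℂ (S.restrictScalars ℂ))
    have := isIrreducible_ofModule' (G := G) S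
    have hzero := sum_smul_eq_zero_of_cinner_eq_zero _ hf
      (h _ (isIrrChar_character (ofModule' S)))
    refine Submodule.mem_annihilator.2 fun s hs => ?_
    simpa only [z, ofModule', MonoidAlgebra.lift_symm_apply, MonoidAlgebra.of_apply,
      LinearMap.sum_apply, LinearMap.smul_apply, Algebra.lsmul_coe, Finset.sum_smul, smul_assoc,
      AddSubmonoidClass.coe_finsetSum, SetLike.val_smul_of_tower, SetLike.mk_smul_mk,
      ZeroMemClass.coe_zero, LinearMap.zero_apply]
      using congrArg Subtype.val (LinearMap.congr_fun hzero ⟨s, hs⟩)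
  have hz : z ∈ (⊤ : Submodule (MonoidAlgebra ℂ G) (MonoidAlgebra ℂ G)).annihilator := by
    have : NeZero (Nat.card G : ℂ) := ⟨by simp⟩
    rw [← IsSemisimpleModule.sSup_simples_eq_top, sSup_eq_iSup', Submodule.annihilator_iSup]
    exact (Submodule.mem_iInf _).2 fun S => hsimple S S.2
  have hz0 : z = 0 := by simpa using Submodule.mem_annihilator.1 hz 1 trivial
  ext x
  simpa [z, Finsupp.single_apply, Finset.sum_apply'] using
    congrArg (fun w : MonoidAlgebra ℂ G => w.coeff x⁻¹) hz0

end Completeness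

section Irr

variable [Finite G]

lemma linearIndepOn_isIrrChar : LinearIndepOn ℂ id {f : G → ℂ | IsIrrChar G f} := by
  cases nonempty_fintype G
  rw [linearIndepOn_iff]
  intro l hl h0
  ext f
  by_contra hf
  have hfs : f ∈ l.support := Finsupp.mem_support_iff.2 hf
  refine hf ?_
  calc l f = ∑ g ∈ l.support, l g * cinner g f := by
        rw [Finset.sum_eq_single_of_mem f hfs, (isIrrChar_iff.1 (hl hfs)).2, mul_one]
        intro g hg hgf
        rw [cinner_eq_ite_of_isIrrChar (hl hg) (hl hfs), if_neg hgf, mul_zero]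
    _ = cinner (Finsupp.linearCombination ℂ id l) f := by
        simp [Finsupp.linearCombination_apply, Finsupp.sum, LinearMap.sum_apply]
    _ = 0 := by rw [h0, map_zero, LinearMap.zero_apply]

variable (G) in
/-- The finite set of irreducible complex characters of `G`. -/
noncomputable def irr : Finset (G → ℂ) :=
  (linearIndepOn_isIrrChar (G := G)).setFinite.toFinset

@[simp] lemma mem_irr {f : G → ℂ} : f ∈ irr G ↔ IsIrrChar G f := by simp [irr]

end Irr

section Expansion

variable [Fintype G]

lemma cinner_sum_irr (a : (G → ℂ) → ℂ) {ψ : G → ℂ} (hψ : ψ ∈ irr G) :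
    cinner (∑ θ ∈ irr G, a θ • θ) ψ = a ψ := by
  simp only [map_sum, map_smul, LinearMap.sum_apply, LinearMap.smul_apply]
  rw [Finset.sum_eq_single_of_mem ψ hψ]
  · rw [(isIrrChar_iff.1 (mem_irr.1 hψ)).2, smul_eq_mul, mul_one]
  · intro θ hθ hne
    rw [cinner_eq_ite_of_isIrrChar (mem_irr.1 hθ) (mem_irr.1 hψ), if_neg hne, smul_zero]

lemma sum_irr_cinner_smul {f : G → ℂ} (hf : f ∈ classFunctions G) :
    ∑ ψ ∈ irr G, cinner f ψ • ψ = f := by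
  rw [← sub_eq_zero]
  refine eq_zero_of_forall_cinner_eq_zero ?_ fun ψ hψ => ?_
  · exact sub_mem (sum_mem fun ψ hψ => Submodule.smul_mem _ _ (mem_irr.1 hψ).mem_classFunctions) hf
  · rw [map_sub, LinearMap.sub_apply, cinner_sum_irr _ (mem_irr.2 hψ), sub_self]

lemma cinner_eq_sum_irr (f : G → ℂ) {g : G → ℂ} (hg : g ∈ classFunctions G) :
    cinner f g = ∑ ψ ∈ irr G, cinner f ψ * cinner g ψ := by
  conv_lhs => rw [← sum_irr_cinner_smul hg, map_sum]
  exact Finset.sum_congr rfl fun ψ _ => by rw [map_smul, smul_eq_mul, mul_comm]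

end Expansion

section Irr

variable [Finite G]

lemma span_irr : Submodule.span ℂ (irr G : Set (G → ℂ)) = classFunctions G := by
  cases nonempty_fintype G
  refine le_antisymm
    (Submodule.span_le.2 fun ψ hψ => (mem_irr.1 hψ).mem_classFunctions) fun f hf => ?_
  rw [← sum_irr_cinner_smul hf]
  exact sum_mem fun ψ hψ => Submodule.smul_mem _ _ (Submodule.subset_span hψ)

variable (G) in
lemma card_irr : (irr G).card = Nat.card (ConjClasses G) := by
  cases nonempty_fintype (ConjClasses G)
  have hli : LinearIndepOn ℂ id (irr G : Set (G → ℂ)) :=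
    linearIndepOn_isIrrChar.mono fun ψ hψ => mem_irr.1 hψ
  rw [← finrank_span_finset_eq_card hli, span_irr, ← (conjClassesFunEquiv G).finrank_eq,
    Module.finrank_fintype_fun_eq_card, Nat.card_eq_fintype_card]

end Irr

section TwoRegular

/-- `twoReg` as a linear map. -/
noncomputable def twoRegHom : (G → ℂ) →ₗ[ℂ] (G → ℂ) where
  toFun := twoReg
  map_add' f g := by ext x; by_cases hx : Odd (orderOf x) <;> simp [twoReg, hx]
  map_smul' c f := by ext x; by_cases hx : Odd (orderOf x) <;> simp [twoReg, hx]

@[simp] lemma coe_twoRegHom : ⇑(twoRegHom : (G → ℂ) →ₗ[ℂ] (G → ℂ)) = twoReg := rfl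

variable (G) in
/-- The conjugacy classes of the 2-regular elements of `G`. -/
def twoRegularClasses : Set (ConjClasses G) := ConjClasses.mk '' {x | Odd (orderOf x)}

lemma mk_mem_twoRegularClasses {x : G} :
    ConjClasses.mk x ∈ twoRegularClasses G ↔ Odd (orderOf x) := by
  refine ⟨?_, fun hx => Set.mem_image_of_mem _ hx⟩
  rintro ⟨y, hy, h⟩
  obtain ⟨c, rfl⟩ := isConj_iff.1 (ConjClasses.mk_eq_mk_iff_isConj.1 h)
  exact (MulEquiv.orderOf_eq (MulAut.conj c) y).symm ▸ hy

lemma twoReg_conjClassesFunEquiv_single {c : ConjClasses G} (hc : c ∈ twoRegularClasses G) :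
    twoReg (conjClassesFunEquiv G (Pi.single c 1) : G → ℂ) =
      conjClassesFunEquiv G (Pi.single c 1) := by
  ext x
  rw [twoReg, ite_eq_left_iff]
  intro hx
  have : ConjClasses.mk x ≠ c := fun h => hx (mk_mem_twoRegularClasses.1 (h ▸ hc))
  exact (Pi.single_eq_of_ne (M := fun _ => ℂ) this _).symm

lemma ncard_twoRegularClasses_le_finrank [Finite G] :
    (twoRegularClasses G).ncard ≤ Set.finrank ℂ (twoReg '' {f | IsIrrChar G f}) := by
  have hli : LinearIndependent ℂ fun c : twoRegularClasses G =>
      (conjClassesFunEquiv G (Pi.single (c : ConjClasses G) 1) : G → ℂ) :=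
    (((Pi.linearIndependent_single_one (ConjClasses G) ℂ).map' _ (conjClassesFunEquiv G).ker
      ).map' _ (Submodule.ker_subtype _)).comp _ Subtype.val_injective
  cases nonempty_fintype (twoRegularClasses G)
  rw [Set.ncard_eq_toFinset_card', Set.toFinset_card, ← finrank_span_eq_card hli]
  refine Submodule.finrank_mono (Submodule.span_le.2 ?_)
  rintro _ ⟨c, rfl⟩
  rw [SetLike.mem_coe, ← coe_twoRegHom, ← Submodule.map_span]
  refine ⟨_, ?_, twoReg_conjClassesFunEquiv_single c.2⟩
  exact Submodule.span_mono (fun ψ hψ => mem_irr.1 hψ)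
    (span_irr.ge (conjClassesFunEquiv G (Pi.single (c : ConjClasses G) 1)).2)

lemma isTwoBasicSet_of_ncard_le [Finite G] {B : Set (G → ℂ)} (hB : B ⊆ {f | IsIrrChar G f})
    (hcard : B.ncard ≤ (twoRegularClasses G).ncard)
    (hspan : ∀ ψ, IsIrrChar G ψ → twoReg ψ ∈ Submodule.span ℤ (twoReg '' B)) :
    IsTwoBasicSet G B := by
  have hspan' : twoReg '' {f | IsIrrChar G f} ⊆ Submodule.span ℤ (twoReg '' B) := by
    rintro _ ⟨ψ, hψ, rfl⟩
    exact hspan ψ hψ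
  refine ⟨hB, LinearIndependent.restrict_scalars' ℤ (K := ℂ) ?_,
    le_antisymm (Submodule.span_mono (Set.image_mono hB)) (Submodule.span_le.2 hspan')⟩
  have : Fintype B := (linearIndepOn_isIrrChar.setFinite.subset hB).fintype
  rw [linearIndependent_iff_card_le_finrank_span, ← Set.toFinset_card,
    ← Set.ncard_eq_toFinset_card', ← Set.image_eq_range]
  refine (hcard.trans ncard_twoRegularClasses_le_finrank).trans ?_
  have : FiniteDimensional ℂ (Submodule.span ℂ (twoReg '' B)) :=
    FiniteDimensional.span_of_finite ℂ (B.toFinite.image _)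
  exact Submodule.finrank_mono (Submodule.span_le.2
    (hspan'.trans (Submodule.span_subset_span ℤ ℂ _)))

lemma isTwoBasicSet_of_odd_card (h : Odd (Nat.card G)) :
    IsTwoBasicSet G {f | IsIrrChar G f} := by
  have := Nat.finite_of_card_ne_zero h.pos.ne'
  have huniv : twoRegularClasses G = Set.univ :=
    Set.eq_univ_of_forall fun c => Quotient.inductionOn c fun x =>
      mk_mem_twoRegularClasses.2 (h.of_dvd_nat (orderOf_dvd_natCard x))
  refine isTwoBasicSet_of_ncard_le subset_rfl (le_of_eq ?_) fun ψ hψ =>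
    Submodule.subset_span (Set.mem_image_of_mem _ hψ)
  rw [huniv, Set.ncard_univ, ← card_irr, ← Set.ncard_coe_finset]
  exact congrArg Set.ncard (by ext; simp)

end TwoRegular

end Characters

section OrbitSums

variable {R M X κ : Type*} {τ : X → X}

/-- One point from each two-element orbit of an involution `τ`. -/
def halfOrbits (τ : X → X) : Set X := {x | WellOrderingRel x (τ x)}

lemma mem_halfOrbits_or_mem_halfOrbits (hτ : Function.Involutive τ) {x : X} (hx : τ x ≠ x) :
    x ∈ halfOrbits τ ∨ τ x ∈ halfOrbits τ := by
  rcases trichotomous_of WellOrderingRel x (τ x) with h | h | h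
  · exact Or.inl h
  · exact absurd h.symm hx
  · exact Or.inr (by rwa [halfOrbits, Set.mem_ofPred_eq, hτ x])

lemma notMem_halfOrbits_of_mem (hτ : Function.Involutive τ) {x : X} (hx : x ∈ halfOrbits τ) :
    τ x ∉ halfOrbits τ := fun h => by
  rw [halfOrbits, Set.mem_ofPred_eq, hτ x] at h
  exact asymm (r := WellOrderingRel) hx h

variable [DecidableEq X]

lemma pair_eq_of_mem_pair (hτ : Function.Involutive τ) {x y : X}
    (h : x ∈ ({y, τ y} : Finset X)) : ({x, τ x} : Finset X) = {y, τ y} := by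
  rcases Finset.mem_insert.1 h with rfl | h
  · rfl
  · rw [Finset.mem_singleton.1 h, hτ y, Finset.pair_comm]

variable [Ring R] [AddCommGroup M] [Module R M] {v : X → M}

lemma mem_span_of_orbitSum_mem_span (hτ : Function.Involutive τ) {N : Submodule R M}
    (hN : ∀ x ∈ halfOrbits τ, v x ∈ N) (horbit : ∀ x, ∑ y ∈ {x, τ x}, v y ∈ N) (x : X) :
    v x ∈ N := by
  by_cases hx : τ x = x
  · simpa [hx] using horbit x
  rcases mem_halfOrbits_or_mem_halfOrbits hτ hx with h | h
  · exact hN x h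
  · have := horbit x
    rw [Finset.sum_pair (Ne.symm hx)] at this
    exact (N.add_mem_iff_left (hN _ h)).1 this

lemma sum_biUnion_orbits [Fintype κ] (hτ : Function.Involutive τ) {u : κ → X}
    (hu : Function.Injective fun k => ({u k, τ (u k)} : Finset X)) {c : X → R}
    (hc : ∀ x, c (τ x) = c x) :
    ∑ x ∈ Finset.univ.biUnion fun k => {u k, τ (u k)}, c x • v x =
      ∑ k, c (u k) • ∑ y ∈ {u k, τ (u k)}, v y := by
  rw [Finset.sum_biUnion]
  · refine Finset.sum_congr rfl fun k _ => ?_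
    rw [Finset.smul_sum]
    refine Finset.sum_congr rfl fun y hy => ?_
    rcases Finset.mem_insert.1 hy with rfl | hy
    · rfl
    · rw [Finset.mem_singleton.1 hy, hc]
  · refine fun k _ l _ hkl => Finset.disjoint_left.2 fun y hyk hyl => hkl (hu ?_)
    exact (pair_eq_of_mem_pair hτ hyk).symm.trans (pair_eq_of_mem_pair hτ hyl)

lemma linearIndepOn_biUnion_orbits_union_halfOrbits [Fintype X] [Fintype κ]
    (hτ : Function.Involutive τ)
    (hrel : ∀ c : X → R, ∑ x, c x • v x = 0 → ∀ x, c (τ x) = c x) {u : κ → X}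
    (hu : Function.Injective fun k => ({u k, τ (u k)} : Finset X))
    (hli : LinearIndependent R fun k => ∑ y ∈ {u k, τ (u k)}, v y) :
    LinearIndepOn R v
      ((Finset.univ.biUnion fun k => {u k, τ (u k)} : Finset X) ∪ halfOrbits τ) := by
  set W : Finset X := Finset.univ.biUnion fun k => {u k, τ (u k)}
  have mem_W : ∀ {x}, x ∈ W ↔ ∃ k, x ∈ ({u k, τ (u k)} : Finset X) := by simp [W]
  rw [linearIndepOn_iff]
  intro c hcB hc0
  rw [Finsupp.linearCombination_apply, Finsupp.sum_fintype _ _ (by simp)] at hc0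
  have hcτ := hrel c hc0
  have hcW : ∀ x, c x ≠ 0 → x ∈ W := by
    intro x hx
    have hτx : c (τ x) ≠ 0 := by rwa [hcτ]
    rcases hcB (Finsupp.mem_support_iff.2 hx) with h | h
    · exact h
    obtain ⟨k, hk⟩ := mem_W.1 ((hcB (Finsupp.mem_support_iff.2 hτx)).resolve_right
      (notMem_halfOrbits_of_mem hτ h))
    exact mem_W.2 ⟨k, by simp [← pair_eq_of_mem_pair hτ hk, hτ x]⟩
  have hck : ∀ k, c (u k) = 0 := by
    refine Fintype.linearIndependent_iff.1 hli _ ?_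
    rw [← sum_biUnion_orbits hτ hu hcτ, ← hc0]
    exact Finset.sum_subset (Finset.subset_univ _) fun x _ hx => by
      rw [not_imp_comm.1 (hcW x) hx, zero_smul]
  ext x
  by_contra hx
  obtain ⟨k, hk⟩ := mem_W.1 (hcW x hx)
  rcases Finset.mem_insert.1 hk with rfl | hk
  · exact hx (hck k)
  · rw [Finset.mem_singleton.1 hk, hcτ] at hx
    exact hx (hck k)

lemma exists_linearIndepOn_of_orbitSums [Nontrivial R] [Fintype X] [Finite κ]
    (hτ : Function.Involutive τ)
    (hrel : ∀ c : X → R, ∑ x, c x • v x = 0 → ∀ x, c (τ x) = c x) {u : κ → X}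
    (hli : LinearIndependent R fun k => ∑ y ∈ {u k, τ (u k)}, v y)
    (hspan : ∀ x, ∑ y ∈ {x, τ x}, v y ∈
      Submodule.span R (Set.range fun k => ∑ y ∈ {u k, τ (u k)}, v y)) :
    ∃ B : Set X, LinearIndepOn R v B ∧
      Submodule.span R (v '' B) = Submodule.span R (Set.range v) := by
  cases nonempty_fintype κ
  have hu : Function.Injective fun k => ({u k, τ (u k)} : Finset X) :=
    fun k l h => hli.injective (congrArg (∑ y ∈ ·, v y) h)
  refine ⟨_, linearIndepOn_biUnion_orbits_union_halfOrbits hτ hrel hu hli, le_antisymm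
    (Submodule.span_mono (Set.image_subset_range _ _)) (Submodule.span_le.2 ?_)⟩
  rintro _ ⟨x, rfl⟩
  refine mem_span_of_orbitSum_mem_span hτ
    (fun y hy => Submodule.subset_span (Set.mem_image_of_mem v (Set.mem_union_right _ hy)))
    (fun y => ?_) x
  refine Submodule.span_le.2 (Set.range_subset_iff.2 fun k => sum_mem fun y hy => ?_) (hspan y)
  refine Submodule.subset_span (Set.mem_image_of_mem v (Set.mem_union_left _ ?_))
  exact Finset.mem_biUnion.2 ⟨k, Finset.mem_univ k, hy⟩

end OrbitSums

section IndexTwo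

variable {S : Type} [Group S] {A : Subgroup S}

/-- Restriction of functions to a subgroup. -/
def res (A : Subgroup S) : (S → ℂ) →ₗ[ℂ] (A → ℂ) := LinearMap.funLeft ℂ ℂ A.subtype

@[simp] lemma res_apply (f : S → ℂ) (a : A) : res A f a = f a := rfl

lemma IsChar.res {f : S → ℂ} (hf : IsChar f) : IsChar (res A f) := hf.comp A.subtype

lemma twoReg_res (f : S → ℂ) : twoReg (res A f) = res A (twoReg f) := by
  ext a
  simp [twoReg]

/-- Extension by zero of functions from a subgroup. -/
noncomputable def extZero (A : Subgroup S) : (A → ℂ) →ₗ[ℂ] (S → ℂ) :=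
  Function.ExtendByZero.linearMap ℂ A.subtype

@[simp] lemma extZero_coe (f : A → ℂ) (a : A) : extZero A f a = f a :=
  A.subtype_injective.extend_apply f (0 : S → ℂ) a

lemma extZero_of_notMem (f : A → ℂ) {x : S} (hx : x ∉ A) : extZero A f x = 0 :=
  Function.extend_apply' f (0 : S → ℂ) x fun ⟨a, ha⟩ => hx (ha ▸ a.2)

lemma res_extZero (f : A → ℂ) : res A (extZero A f) = f := by
  ext a
  simp

lemma mem_of_odd_orderOf_of_index_two (hA : A.index = 2) {x : S} (hx : Odd (orderOf x)) :
    x ∈ A := by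
  obtain ⟨k, hk⟩ := hx
  have h : x ^ (2 * k) * x = 1 := by rw [← pow_succ, ← hk, pow_orderOf_eq_one]
  rw [eq_inv_of_mul_eq_one_right h, pow_mul]
  exact A.inv_mem (A.pow_mem (A.sq_mem_of_index_two hA x) k)

lemma extZero_twoReg_res (hA : A.index = 2) (f : S → ℂ) :
    extZero A (twoReg (res A f)) = twoReg f := by
  ext x
  by_cases hx : x ∈ A
  · rw [twoReg_res]
    exact extZero_coe _ ⟨x, hx⟩
  · rw [extZero_of_notMem _ hx, twoReg,
      if_neg fun h => hx (mem_of_odd_orderOf_of_index_two hA h)]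

lemma linearIndependent_twoReg_res (hA : A.index = 2) {B : Set (S → ℂ)}
    (hB : LinearIndependent ℤ fun ψ : B => twoReg (ψ : S → ℂ)) :
    LinearIndependent ℤ fun ψ : B => twoReg (res A (ψ : S → ℂ)) := by
  refine LinearIndependent.of_comp ((extZero A).restrictScalars ℤ) ?_
  simpa only [Function.comp_def, LinearMap.coe_restrictScalars, extZero_twoReg_res hA] using hB

lemma twoReg_res_mem_span {B : Set (S → ℂ)} {ψ : S → ℂ}
    (hψ : twoReg ψ ∈ Submodule.span ℤ (twoReg '' B)) :
    twoReg (res A ψ) ∈ Submodule.span ℤ (Set.range fun φ : B => twoReg (res A (φ : S → ℂ))) := by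
  have := Submodule.mem_map_of_mem (f := (res A).restrictScalars ℤ) hψ
  rw [Submodule.map_span, Set.image_image, Set.image_eq_range] at this
  simpa only [twoReg_res, LinearMap.coe_restrictScalars] using this

section InnerProduct

variable [Fintype S] [Fintype A]

lemma two_mul_cinner_extZero (hA : A.index = 2) (f : A → ℂ) (g : S → ℂ) :
    2 * cinner (extZero A f) g = cinner f (res A g) := by
  have hsum : ∑ x, extZero A f x * g x⁻¹ = ∑ a : A, f a * res A g a⁻¹ := by
    rw [← Finset.sum_subset (Finset.subset_univ {x | x ∈ A}) fun x _ hx => by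
      rw [extZero_of_notMem f (by simpa using hx), zero_mul]]
    rw [Finset.sum_subtype (p := (· ∈ A)) (F := ‹Fintype A›) _ (by simp)]
    simp
  have hcard : (Nat.card S : ℂ) = 2 * Nat.card A := by
    rw [← A.card_mul_index, hA]
    push_cast
    ring
  rw [cinner_apply, cinner_apply, hsum, hcard]
  field_simp

end InnerProduct

variable [A.Normal]

/-- The twist of functions on a normal subgroup by conjugation. -/
def conjTwist (τ : S) : (A → ℂ) →ₗ[ℂ] (A → ℂ) :=
  LinearMap.funLeft ℂ ℂ (MulAut.conjNormal τ : A ≃* A)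

@[simp] lemma conjTwist_apply (τ : S) (f : A → ℂ) (a : A) :
    conjTwist τ f a = f (MulAut.conjNormal τ a) := rfl

lemma conjTwist_conjTwist (σ τ : S) (f : A → ℂ) :
    conjTwist σ (conjTwist τ f) = conjTwist (τ * σ) f := by
  ext a
  simp

lemma conjTwist_of_mem {f : A → ℂ} (hf : f ∈ classFunctions A) {σ : S} (hσ : σ ∈ A) :
    conjTwist σ f = f :=
  funext fun a => hf ⟨σ, hσ⟩ a

lemma conjTwist_res {f : S → ℂ} (hf : f ∈ classFunctions S) (τ : S) :
    conjTwist τ (res A f) = res A f := by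
  ext a
  simpa using hf τ a

lemma twoReg_conjTwist (τ : S) (f : A → ℂ) :
    twoReg (conjTwist τ f) = conjTwist τ (twoReg f) := by
  ext a
  simp [twoReg]

lemma conjTwist_mem_irr [Finite A] {f : A → ℂ} (hf : f ∈ irr A) (τ : S) :
    conjTwist τ f ∈ irr A := by
  cases nonempty_fintype A
  rw [mem_irr, isIrrChar_iff] at hf ⊢
  exact ⟨hf.1.comp (MulAut.conjNormal τ : A ≃* A).toMonoidHom,
    (cinner_comp_mulEquiv f f _).trans hf.2⟩

lemma conjTwist_conjTwist_self (hA : A.index = 2) {f : A → ℂ} (hf : f ∈ classFunctions A)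
    (τ : S) : conjTwist τ (conjTwist τ f) = f := by
  rw [conjTwist_conjTwist, conjTwist_of_mem hf (Subgroup.mul_self_mem_of_index_two hA τ)]

lemma conjTwist_eq_of_notMem (hA : A.index = 2) {f : A → ℂ} (hf : f ∈ classFunctions A)
    {σ τ : S} (hσ : σ ∉ A) (hτ : τ ∉ A) : conjTwist σ f = conjTwist τ f := by
  have h : σ * τ⁻¹ ∈ A := by
    rw [Subgroup.mul_mem_iff_of_index_two hA, inv_mem_iff]
    simp [hσ, hτ]
  nth_rw 2 [← conjTwist_of_mem hf h]
  rw [conjTwist_conjTwist, inv_mul_cancel_right]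

lemma extZero_mem_classFunctions (hA : A.index = 2) {f : A → ℂ} (hf : f ∈ classFunctions A)
    {τ : S} (hτ : τ ∉ A) (hfτ : conjTwist τ f = f) : extZero A f ∈ classFunctions S := by
  intro g x
  by_cases hx : x ∈ A
  · have hg : conjTwist g f = f := by
      by_cases hg : g ∈ A
      · exact conjTwist_of_mem hf hg
      · rw [conjTwist_eq_of_notMem hA hf hg hτ, hfτ]
    lift x to A using hx
    rw [← MulAut.conjNormal_apply, extZero_coe, extZero_coe]
    exact congrFun hg x
  · rw [extZero_of_notMem f hx, extZero_of_notMem f]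
    rwa [← Subgroup.Normal.mem_comm_iff ‹A.Normal›, ← mul_assoc, inv_mul_cancel, one_mul]

section Clifford

variable {τ : S} {θ φ : A → ℂ}

/-- The conjugates of `θ` under a group containing `A` with index two, where `τ` is an element of
that group outside `A`. -/
noncomputable def conjPair (τ : S) (θ : A → ℂ) : Finset (A → ℂ) := {θ, conjTwist τ θ}

lemma mem_conjPair : φ ∈ conjPair τ θ ↔ φ = θ ∨ φ = conjTwist τ θ := by simp [conjPair]

lemma mem_conjPair_self : θ ∈ conjPair τ θ := mem_conjPair.2 (.inl rfl)

/-- The sum of the distinct conjugates of `θ`, each taken once. -/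
noncomputable def conjSum (τ : S) (θ : A → ℂ) : A → ℂ := ∑ φ ∈ conjPair τ θ, φ

lemma conjTwist_conjSum (hA : A.index = 2) (hθ : θ ∈ classFunctions A) :
    conjTwist τ (conjSum τ θ) = conjSum τ θ := by
  rw [conjSum, conjPair]
  by_cases h : θ = conjTwist τ θ
  · simp [← h]
  · rw [Finset.sum_pair h, map_add, conjTwist_conjTwist_self hA hθ, add_comm]

lemma mem_irr_of_mem_conjPair [Finite A] (hθ : θ ∈ irr A)
    (hφ : φ ∈ conjPair τ θ) : φ ∈ irr A := by
  rcases mem_conjPair.1 hφ with rfl | rfl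
  · exact hθ
  · exact conjTwist_mem_irr hθ τ

lemma conjSum_mem_classFunctions [Finite A] (hθ : θ ∈ irr A) : conjSum τ θ ∈ classFunctions A :=
  sum_mem fun _ hφ => (mem_irr.1 (mem_irr_of_mem_conjPair hθ hφ)).mem_classFunctions

section

variable [Fintype A]

lemma cinner_conjSum (hθ : θ ∈ irr A) (hφ : φ ∈ irr A) :
    cinner (conjSum τ θ) φ =
      if φ ∈ conjPair τ θ then 1 else 0 := by
  rw [conjSum, map_sum, LinearMap.sum_apply, Finset.sum_congr rfl fun η hη =>
    cinner_eq_ite_of_isIrrChar (mem_irr.1 (mem_irr_of_mem_conjPair hθ hη)) (mem_irr.1 hφ)]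
  exact Finset.sum_ite_eq' _ φ fun _ => (1 : ℂ)

lemma cinner_conjTwist_res {ψ : S → ℂ} (hψ : ψ ∈ classFunctions S) :
    cinner (conjTwist τ θ) (res A ψ) = cinner θ (res A ψ) := by
  nth_rw 1 [← conjTwist_res hψ τ]
  exact cinner_comp_mulEquiv _ _ _

lemma cinner_conjSum_res {ψ : S → ℂ} (hψ : ψ ∈ classFunctions S) :
    cinner (conjSum τ θ) (res A ψ) =
      (conjPair τ θ).card * cinner θ (res A ψ) := by
  rw [conjSum, map_sum, LinearMap.sum_apply, ← nsmul_eq_mul, ← Finset.sum_const]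
  refine Finset.sum_congr rfl fun η hη => ?_
  rcases mem_conjPair.1 hη with rfl | rfl
  · rfl
  · rw [cinner_conjTwist_res hψ]

end

/-- Expand the extension by zero of `conjSum τ θ` in the irreducible characters of `S`, and
restrict back to `A`. -/
lemma card_mul_sum_cinner_res_mul [Finite S] [Fintype A] (hA : A.index = 2) (hτ : τ ∉ A)
    (hθ : θ ∈ irr A) (hφ : φ ∈ irr A) :
    (conjPair τ θ).card *
        ∑ ψ ∈ irr S, cinner θ (res A ψ) * cinner φ (res A ψ) =
      if φ ∈ conjPair τ θ then 2 else 0 := by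
  cases nonempty_fintype S
  set f := conjSum τ θ
  have hf : extZero A f ∈ classFunctions S :=
    extZero_mem_classFunctions hA (conjSum_mem_classFunctions hθ) hτ
      (conjTwist_conjSum hA (mem_irr.1 hθ).mem_classFunctions)
  have hexp : f = ∑ ψ ∈ irr S, cinner (extZero A f) ψ • res A ψ := by
    simp_rw [← map_smul, ← map_sum, sum_irr_cinner_smul hf, res_extZero]
  calc _ = ∑ ψ ∈ irr S, cinner f (res A ψ) * cinner φ (res A ψ) := by
        rw [Finset.mul_sum]
        refine Finset.sum_congr rfl fun ψ hψ => ?_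
        rw [cinner_conjSum_res (mem_irr.1 hψ).mem_classFunctions, mul_assoc]
    _ = 2 * cinner (∑ ψ ∈ irr S, cinner (extZero A f) ψ • res A ψ) φ := by
        simp only [map_sum, map_smul, LinearMap.sum_apply, LinearMap.smul_apply, smul_eq_mul,
          Finset.mul_sum, ← mul_assoc, two_mul_cinner_extZero hA, cinner_comm φ]
    _ = _ := by
        rw [← hexp, cinner_conjSum hθ hφ]
        split_ifs <;> norm_num

lemma cinner_res_eq_ite [Finite S] [Fintype A] (hA : A.index = 2) (hτ : τ ∉ A)
    (hθ : θ ∈ irr A) (hφ : φ ∈ irr A) {ψ : S → ℂ} (hψ : ψ ∈ irr S)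
    (h : cinner θ (res A ψ) ≠ 0) :
    cinner φ (res A ψ) = if φ ∈ conjPair τ θ then 1 else 0 := by
  have hmult : ∀ η ∈ irr A, ∀ χ ∈ irr S, ∃ m : ℕ, cinner η (res A χ) = m := fun η hη χ hχ =>
    (mem_irr.1 hη).isChar.exists_cinner_eq_natCast (mem_irr.1 hχ).isChar.res
  choose! m hm using hmult
  set k := (conjPair τ θ).card with hk
  have hk0 : k ≠ 0 := Finset.card_ne_zero_of_mem mem_conjPair_self
  have hsum : ∀ η ∈ irr A, k * ∑ χ ∈ irr S, m θ χ * m η χ =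
      if η ∈ conjPair τ θ then 2 else 0 := fun η hη => by
    have := card_mul_sum_cinner_res_mul hA hτ hθ hη
    rw [Finset.sum_congr rfl fun χ hχ => by rw [hm θ hθ χ hχ, hm η hη χ hχ]] at this
    exact_mod_cast this
  have hle : ∀ η, m θ ψ * m η ψ ≤ k * ∑ χ ∈ irr S, m θ χ * m η χ := fun η =>
    (Finset.single_le_sum (f := fun χ => m θ χ * m η χ) (fun _ _ => zero_le) hψ).trans
      (Nat.le_mul_of_pos_left _ (Nat.pos_of_ne_zero hk0))
  have hθ0 : m θ ψ ≠ 0 := by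
    rw [hm θ hθ ψ hψ] at h
    exact_mod_cast h
  have hθ1 : m θ ψ = 1 := by
    have := (hle θ).trans_eq (hsum θ hθ)
    rw [if_pos mem_conjPair_self] at this
    nlinarith [Nat.pos_of_ne_zero hθ0]
  split_ifs with hmem
  · rcases mem_conjPair.1 hmem with rfl | rfl
    · rw [hm φ hφ ψ hψ, hθ1, Nat.cast_one]
    · rw [cinner_conjTwist_res (mem_irr.1 hψ).mem_classFunctions, hm θ hθ ψ hψ, hθ1,
        Nat.cast_one]
  · have := (hle φ).trans_eq (hsum φ hφ)
    rw [if_neg hmem, hθ1, one_mul] at this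
    rw [hm φ hφ ψ hψ, Nat.le_zero.1 this, Nat.cast_zero]

lemma res_eq_conjSum [Finite S] [Fintype A] (hA : A.index = 2) (hτ : τ ∉ A)
    (hθ : θ ∈ irr A) {ψ : S → ℂ} (hψ : ψ ∈ irr S) (h : cinner θ (res A ψ) ≠ 0) :
    res A ψ = conjSum τ θ := by
  rw [← sum_irr_cinner_smul (mem_irr.1 hψ).isChar.res.mem_classFunctions,
    ← sum_irr_cinner_smul (conjSum_mem_classFunctions (τ := τ) hθ)]
  refine Finset.sum_congr rfl fun φ hφ => ?_
  rw [cinner_comm, cinner_res_eq_ite hA hτ hθ hφ hψ h, cinner_conjSum hθ hφ]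

lemma exists_res_eq_conjSum [Finite S] [Finite A] (hA : A.index = 2) (hτ : τ ∉ A)
    (hθ : θ ∈ irr A) : ∃ ψ ∈ irr S, res A ψ = conjSum τ θ := by
  cases nonempty_fintype A
  have hsum := card_mul_sum_cinner_res_mul hA hτ hθ hθ
  rw [if_pos mem_conjPair_self] at hsum
  obtain ⟨ψ, hψ, h⟩ := Finset.exists_ne_zero_of_sum_ne_zero
    (right_ne_zero_of_mul (hsum.trans_ne two_ne_zero))
  exact ⟨ψ, hψ, res_eq_conjSum hA hτ hθ hψ (left_ne_zero_of_mul h)⟩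

lemma exists_conjSum_eq_res [Finite S] [Finite A] (hA : A.index = 2) (hτ : τ ∉ A) {ψ : S → ℂ}
    (hψ : ψ ∈ irr S) (h0 : twoReg ψ ≠ 0) : ∃ θ ∈ irr A, res A ψ = conjSum τ θ := by
  cases nonempty_fintype A
  have hne : res A ψ ≠ 0 := fun h => h0 <| by
    rw [← extZero_twoReg_res hA ψ, h, ← coe_twoRegHom, map_zero, map_zero]
  rw [← sum_irr_cinner_smul (mem_irr.1 hψ).isChar.res.mem_classFunctions] at hne
  obtain ⟨θ, hθ, h⟩ := Finset.exists_ne_zero_of_sum_ne_zero hne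
  rw [cinner_comm] at h
  exact ⟨θ, hθ, res_eq_conjSum hA hτ hθ hψ (left_ne_zero_of_smul h)⟩

end Clifford

lemma conjTwist_eq_of_twoReg_eq_zero (hA : A.index = 2)
    (hsplit : ∀ x ∈ A, ¬ Odd (orderOf x) → ∃ σ ∉ A, σ * x * σ⁻¹ = x) {τ : S} (hτ : τ ∉ A)
    {f : A → ℂ} (hf : f ∈ classFunctions A) (h0 : twoReg f = 0) : conjTwist τ f = f := by
  ext a
  by_cases ha : Odd (orderOf a)
  · have h0τ : twoReg (conjTwist τ f) = 0 := by rw [twoReg_conjTwist, h0, map_zero]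
    have h0a := congrFun h0 a
    have h0τa := congrFun h0τ a
    rw [twoReg, if_pos ha] at h0a h0τa
    exact h0τa.trans h0a.symm
  · obtain ⟨σ, hσ, hσa⟩ := hsplit a a.2 (by rwa [Subgroup.orderOf_coe])
    have hfix : MulAut.conjNormal σ a = a := Subtype.ext (by simpa using hσa)
    rw [conjTwist_eq_of_notMem hA hf hτ hσ, conjTwist_apply, hfix]

lemma eq_of_sum_smul_twoReg_eq_zero [Finite A] (hA : A.index = 2)
    (hsplit : ∀ x ∈ A, ¬ Odd (orderOf x) → ∃ σ ∉ A, σ * x * σ⁻¹ = x) {τ : S} (hτ : τ ∉ A)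
    {t : irr A → irr A} (ht : ∀ θ, (t θ : A → ℂ) = conjTwist τ θ) (htt : Function.Involutive t)
    (c : irr A → ℤ) (hc : ∑ θ, c θ • twoReg (θ : A → ℂ) = 0) (θ : irr A) : c (t θ) = c θ := by
  let f : A → ℂ := ∑ θ, c θ • (θ : A → ℂ)
  have hf : f ∈ classFunctions A := sum_mem fun θ _ =>
    zsmul_mem (mem_irr.1 θ.2).mem_classFunctions _
  have h0 : twoReg f = 0 := by
    rw [← coe_twoRegHom, map_sum, ← hc]
    exact Finset.sum_congr rfl fun θ _ => map_zsmul _ _ _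
  have hfτ : ∑ θ, c (t θ) • (θ : A → ℂ) = f := by
    rw [← conjTwist_eq_of_twoReg_eq_zero hA hsplit hτ hf h0, map_sum]
    refine Fintype.sum_equiv htt.toPerm _ _ fun θ => ?_
    rw [map_zsmul, ← ht, htt.coe_toPerm, htt θ]
  have hli : LinearIndependent ℤ fun θ : irr A => (θ : A → ℂ) :=
    LinearIndependent.restrict_scalars' ℤ
      (linearIndepOn_isIrrChar.mono fun ψ hψ => mem_irr.1 hψ)
  exact Fintype.linearIndependent_iffₛ.1 hli _ _ hfτ θ

lemma sum_pair_twoReg [Finite A] {τ : S} {t : irr A → irr A}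
    (ht : ∀ θ, (t θ : A → ℂ) = conjTwist τ θ) (θ : irr A) :
    ∑ y ∈ {θ, t θ}, twoReg (y : A → ℂ) = twoReg (conjSum τ (θ : A → ℂ)) := by
  rw [conjSum, conjPair, ← coe_twoRegHom, map_sum, ← ht]
  rw [show ({(θ : A → ℂ), ↑(t θ)} : Finset (A → ℂ)) =
    ({θ, t θ} : Finset (irr A)).map (Function.Embedding.subtype _) by simp, Finset.sum_map]
  rfl

theorem exists_isTwoBasicSet_of_index_two [Finite S] (hA : A.index = 2)
    (hsplit : ∀ x ∈ A, ¬ Odd (orderOf x) → ∃ σ ∉ A, σ * x * σ⁻¹ = x)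
    {B : Set (S → ℂ)} (hB : IsTwoBasicSet S B) : ∃ B' : Set (A → ℂ), IsTwoBasicSet A B' := by
  obtain ⟨hBirr, hBli, hBspan⟩ := hB
  obtain ⟨τ, hτ⟩ : ∃ τ, τ ∉ A := by
    by_contra! h
    rw [(Subgroup.eq_top_iff' A).2 h, Subgroup.index_top] at hA
    omega
  let t : irr A → irr A := fun θ => ⟨conjTwist τ θ, conjTwist_mem_irr θ.2 τ⟩
  have ht : ∀ θ, (t θ : A → ℂ) = conjTwist τ θ := fun _ => rfl
  have htt : Function.Involutive t := fun θ =>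
    Subtype.ext (conjTwist_conjTwist_self hA (mem_irr.1 θ.2).mem_classFunctions τ)
  have hconst : ∀ ψ : B, ∃ θ : irr A, res A ψ = conjSum τ θ := fun ψ => by
    obtain ⟨θ, hθ, h⟩ := exists_conjSum_eq_res hA hτ (mem_irr.2 (hBirr ψ.2)) (hBli.ne_zero ψ)
    exact ⟨⟨θ, hθ⟩, h⟩
  choose u hu using hconst
  have hsum : (fun ψ : B => ∑ y ∈ {u ψ, t (u ψ)}, twoReg (y : A → ℂ)) =
      fun ψ : B => twoReg (res A (ψ : S → ℂ)) := by
    ext1 ψ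
    rw [sum_pair_twoReg ht, hu]
  have hspan : ∀ θ : irr A, ∑ y ∈ {θ, t θ}, twoReg (y : A → ℂ) ∈
      Submodule.span ℤ (Set.range fun ψ : B => twoReg (res A (ψ : S → ℂ))) := fun θ => by
    obtain ⟨ψ, hψ, h⟩ := exists_res_eq_conjSum hA hτ θ.2
    rw [sum_pair_twoReg ht, ← h]
    exact twoReg_res_mem_span
      (hBspan ▸ Submodule.subset_span (Set.mem_image_of_mem _ (mem_irr.1 hψ)))
  have : Finite B := linearIndepOn_isIrrChar.setFinite.subset hBirr
  obtain ⟨B', hli, hspan'⟩ := exists_linearIndepOn_of_orbitSums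
    (v := fun θ : irr A => twoReg (θ : A → ℂ)) (u := u) htt
    (eq_of_sum_smul_twoReg_eq_zero hA hsplit hτ ht htt)
    (by rw [hsum]; exact linearIndependent_twoReg_res hA hBli) (by rw [hsum]; exact hspan)
  refine ⟨Subtype.val '' B', ?_, ?_, ?_⟩
  · rintro _ ⟨θ, -, rfl⟩
    exact mem_irr.1 θ.2
  · exact LinearIndepOn.image_of_comp Subtype.val twoReg hli
  · rw [Set.image_image, hspan']
    congr 1
    ext f
    simp

end IndexTwo

section YoungCharacters

variable {Ω ι κ : Type} [Fintype Ω]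

/-- The content of a colouring `f` of `Ω`: the number of points of each colour. -/
noncomputable def content (f : Ω → ι) (i : ι) : ℕ := Finset.card {x | f x = i}

lemma content_comp_perm (f : Ω → ι) (σ : Equiv.Perm Ω) : content (f ∘ σ) = content f :=
  funext fun _ => Finset.card_equiv σ (by simp)

/-- The permutation character of the symmetric group on the colourings of `Ω` of content `α`;
if `α` is a partition of the cardinality of `Ω`, these correspond to its row tabloids. -/
noncomputable def youngChar (Ω : Type) [Fintype Ω] [Fintype ι] (α : ι → ℕ)
    (σ : Equiv.Perm Ω) : ℂ :=
  Finset.card {f : Ω → ι | content f = α ∧ f ∘ σ = f}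

omit [Fintype Ω] in
lemma comp_perm_inv_eq_iff (f : Ω → ι) (σ : Equiv.Perm Ω) :
    f ∘ (σ⁻¹ : Equiv.Perm Ω) = f ↔ f ∘ σ = f :=
  (σ.comp_symm_eq f f).trans eq_comm

lemma isChar_youngChar [Fintype ι] (α : ι → ℕ) : IsChar (youngChar Ω α) := by
  let _ : MulAction (Equiv.Perm Ω) (Ω → ι) := arrowAction
  let X : SubMulAction (Equiv.Perm Ω) (Ω → ι) :=
    { carrier := {f | content f = α}
      smul_mem' := fun σ f hf => (content_comp_perm f (σ⁻¹ : Equiv.Perm Ω)).trans hf }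
  convert! isChar_card_fixedPoints (G := Equiv.Perm Ω) X with σ
  rw [youngChar, Nat.cast_inj, ← Finset.card_map (Function.Embedding.subtype (· ∈ X))]
  congr 1
  ext f
  have hX : f ∈ X ↔ content f = α := Iff.rfl
  have hσ : σ • f = f ↔ f ∘ σ = f := comp_perm_inv_eq_iff f σ
  simp [Subtype.ext_iff, hX, ← hσ, and_comm]

/-- The sign character of the symmetric group. -/
noncomputable def signChar (Ω : Type) [Fintype Ω] (σ : Equiv.Perm Ω) : ℂ :=
  (Equiv.Perm.sign σ : ℤ)

lemma isChar_signChar : IsChar (signChar Ω) :=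
  isChar_monoidHom
    (((Int.castRingHom ℂ : ℤ →* ℂ).comp (Units.coeHom ℤ)).comp Equiv.Perm.sign)

/-- The sum is the determinant of the matrix with entries `1` where `f x = f y`. -/
lemma sum_signChar_stabilizer (f : Ω → ι) :
    (∑ σ : Equiv.Perm Ω, if f ∘ σ = f then signChar Ω σ else 0) =
      if Function.Injective f then 1 else 0 := by
  let M : Matrix Ω Ω ℂ := fun x y => if f x = f y then 1 else 0
  have hdet : (∑ σ : Equiv.Perm Ω, if f ∘ σ = f then signChar Ω σ else 0) = M.det := by
    rw [Matrix.det_apply']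
    refine Finset.sum_congr rfl fun σ _ => ?_
    rw [Finset.prod_ite_zero, mul_ite, mul_zero, Finset.prod_const_one, mul_one]
    simp only [funext_iff, Function.comp_apply, Finset.mem_univ, true_imp_iff, signChar]
  rw [hdet]
  split_ifs with hf
  · rw [← Matrix.det_one (n := Ω)]
    congr 1
    ext x y
    simp [M, Matrix.one_apply, hf.eq_iff]
  · obtain ⟨x, y, hxy, hne⟩ := Function.not_injective_iff.1 hf
    exact Matrix.det_zero_of_row_eq hne (by simp [M, hxy])

variable [Fintype ι]

lemma youngChar_inv (α : ι → ℕ) (σ : Equiv.Perm Ω) : youngChar Ω α σ⁻¹ = youngChar Ω α σ := by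
  simp only [youngChar, comp_perm_inv_eq_iff]

variable [Fintype κ] [DecidableEq κ]

lemma youngChar_mul_youngChar (α : ι → ℕ) (β : κ → ℕ) (σ : Equiv.Perm Ω) :
    youngChar Ω α σ * youngChar Ω β σ =
      Finset.card {h ∈ ({h | content (Prod.fst ∘ h) = α ∧ content (Prod.snd ∘ h) = β} :
        Finset (Ω → ι × κ)) | h ∘ σ = h} := by
  rw [youngChar, youngChar, ← Nat.cast_mul, ← Finset.card_product, Nat.cast_inj]
  refine (Finset.card_equiv (Equiv.arrowProdEquivProdArrow Ω (fun _ => ι) fun _ => κ)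
    fun h => ?_).symm
  simp only [Finset.mem_filter, Finset.mem_univ, true_and, Finset.mem_product]
  have hσ : h ∘ σ = h ↔
      (Prod.fst ∘ h) ∘ σ = Prod.fst ∘ h ∧ (Prod.snd ∘ h) ∘ σ = Prod.snd ∘ h := by
    simp only [funext_iff, Function.comp_apply, Prod.ext_iff, forall_and]
  rw [hσ]
  exact and_and_and_comm

/-- By Mackey's formula the multiplicity counts the `0`-`1`-matrices with row sums `α` and column
sums `β`; here each of them is counted once for every bijection of `Ω` onto its support. -/
lemma cinner_youngChar_signChar_mul_youngChar (α : ι → ℕ) (β : κ → ℕ) :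
    cinner (youngChar Ω α) (signChar Ω * youngChar Ω β) =
      ((Fintype.card Ω).factorial : ℂ)⁻¹ * Finset.card {h : Ω → ι × κ |
        (content (Prod.fst ∘ h) = α ∧ content (Prod.snd ∘ h) = β) ∧ Function.Injective h} := by
  rw [cinner_apply, Nat.card_eq_fintype_card, Fintype.card_perm]
  congr 1
  set S : Finset (Ω → ι × κ) :=
    {h | content (Prod.fst ∘ h) = α ∧ content (Prod.snd ∘ h) = β} with hS
  calc ∑ σ, youngChar Ω α σ * (signChar Ω * youngChar Ω β) σ⁻¹
      = ∑ σ : Equiv.Perm Ω, ∑ h ∈ S, if h ∘ σ = h then signChar Ω σ else 0 := by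
        refine Finset.sum_congr rfl fun σ _ => ?_
        rw [← Finset.sum_filter, Finset.sum_const, nsmul_eq_mul, ← youngChar_mul_youngChar,
          Pi.mul_apply, youngChar_inv, signChar, signChar, Equiv.Perm.sign_inv]
        ring
    _ = ∑ h ∈ S, if Function.Injective h then 1 else 0 := by
        rw [Finset.sum_comm]
        exact Finset.sum_congr rfl fun h _ => by convert sum_signChar_stabilizer h
    _ = _ := by
        rw [← Finset.natCast_card_filter, hS, Finset.filter_filter]

end YoungCharacters

section GaleRyser

variable {Ω ι κ : Type} [Fintype Ω] {N : ℕ}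

lemma sum_content (g : Ω → κ) (s : Finset κ) :
    ∑ j ∈ s, content g j = Finset.card {x | g x ∈ s} :=
  Finset.sum_card_fiberwise_eq_card_filter _ s g

lemma content_comp_val_comp_equiv [DecidableEq κ] {s : Finset ι} (e : Ω ≃ s) (p : ι → κ) (j : κ) :
    content (fun x => p (e x)) j = Finset.card {q ∈ s | p q = j} := by
  rw [content, ← Finset.card_map (e.toEmbedding.trans (Function.Embedding.subtype _))]
  congr 1
  ext q
  simp [e.exists_congr_left, and_comm]

lemma card_filter_row_le_min {h : Ω → ι × Fin N} (hinj : Function.Injective h) (i : ι) (k : ℕ) :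
    Finset.card {x | (h x).1 = i ∧ (h x).2 < k} ≤ min (content (Prod.fst ∘ h) i) k := by
  refine le_min (Finset.card_le_card fun x => by simp +contextual) ?_
  rw [← Finset.card_range k]
  refine Finset.card_le_card_of_injOn (fun x => (h x).2) (fun x hx => ?_) fun x hx y hy hxy => ?_
  · simp_all
  · simp only [Finset.coe_filter, Finset.mem_univ, true_and, Set.mem_ofPred_eq] at hx hy
    exact hinj (Prod.ext (hx.1.trans hy.1.symm) (Fin.ext hxy))

variable [Fintype ι] {α : ι → ℕ}

lemma card_filter_eq_sum_card_filter_and (s : Finset κ) (f : κ → ι) (P : κ → Prop)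
    [DecidablePred P] :
    Finset.card {x ∈ s | P x} = ∑ i, Finset.card {x ∈ s | f x = i ∧ P x} := by
  rw [Finset.card_eq_sum_card_fiberwise (f := f) (t := Finset.univ) fun _ _ => by simp]
  simp only [Finset.filter_filter, and_comm]

/-- The number of cells in the first `k` columns of the diagram with row lengths `α`. A partition
dominates another one of the same number if and only if its `colSum`s are at most those of the
other one. -/
def colSum (α : ι → ℕ) (k : ℕ) : ℕ := ∑ i, min (α i) k

/-- The diagram with row lengths `α`, drawn in `N` columns. -/
def diagram (N : ℕ) (α : ι → ℕ) : Finset (ι × Fin N) := {q | q.2 < α q.1}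

/-- The conjugate of a composition: the column lengths of its diagram. -/
def colLen (N : ℕ) (α : ι → ℕ) (j : Fin N) : ℕ := Finset.card {q ∈ diagram N α | q.2 = j}

lemma card_filter_diagram (hα : ∀ i, α i ≤ N) (i : ι) (k : ℕ) :
    Finset.card {q ∈ diagram N α | q.1 = i ∧ q.2 < k} = min (α i) k := by
  have hmap : ({q ∈ diagram N α | q.1 = i ∧ q.2 < k} : Finset (ι × Fin N)) =
      ({j | j < min (α i) k} : Finset (Fin N)).map (Function.Embedding.sectR i (Fin N)) := by
    ext q
    simp only [diagram, Finset.mem_filter, Finset.mem_univ, true_and, Finset.mem_map, lt_min_iff,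
      Function.Embedding.sectR_apply, Prod.ext_iff]
    grind
  rw [hmap, Finset.card_map, Fin.card_filter_val_lt, min_eq_right (min_le_of_left_le (hα i))]

lemma card_filter_fst_diagram (hα : ∀ i, α i ≤ N) (i : ι) :
    Finset.card {q ∈ diagram N α | q.1 = i} = α i := by
  simpa [hα i] using card_filter_diagram hα i N

lemma card_diagram (hα : ∀ i, α i ≤ N) : (diagram N α).card = ∑ i, α i := by
  simpa [card_filter_fst_diagram hα] using
    card_filter_eq_sum_card_filter_and (diagram N α) Prod.fst fun _ => True

lemma sum_colLen (hα : ∀ i, α i ≤ N) (k : ℕ) :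
    ∑ j ∈ ({j | j < k} : Finset (Fin N)), colLen N α j = colSum α k := by
  simp only [colLen]
  rw [Finset.sum_card_fiberwise_eq_card_filter]
  simp only [Finset.mem_filter, Finset.mem_univ, true_and]
  rw [card_filter_eq_sum_card_filter_and _ Prod.fst]
  simp only [card_filter_diagram hα, colSum]

lemma card_filter_lt_of_content_eq (hα : ∀ i, α i ≤ N) {g : Ω → Fin N} (hg : content g = colLen N α)
    (k : ℕ) : Finset.card {x | g x < k} = colSum α k := by
  rw [← sum_colLen hα, ← hg, sum_content]
  simp

/-- This is the easy half of the Gale–Ryser theorem. -/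
lemma colSum_le_colSum_content [Fintype κ] {β : κ → ℕ} (hβ : ∀ i, β i ≤ N) {h : Ω → ι × Fin N}
    (hinj : Function.Injective h) (hsnd : content (Prod.snd ∘ h) = colLen N β) (k : ℕ) :
    colSum β k ≤ colSum (content (Prod.fst ∘ h)) k := by
  rw [← card_filter_lt_of_content_eq hβ hsnd]
  exact (card_filter_eq_sum_card_filter_and _ (fun x => (h x).1) _).trans_le
    (Finset.sum_le_sum fun i _ => card_filter_row_le_min hinj i k)

lemma snd_lt_of_content_eq (hα : ∀ i, α i ≤ N) {h : Ω → ι × Fin N} (hinj : Function.Injective h)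
    (hfst : content (Prod.fst ∘ h) = α) (hsnd : content (Prod.snd ∘ h) = colLen N α) (x : Ω) :
    (h x).2 < α (h x).1 := by
  set i := (h x).1 with hi
  have hsum := card_filter_lt_of_content_eq hα hsnd (α i)
  have hle := fun j => hfst ▸ card_filter_row_le_min hinj j (α i)
  have hrow := (Finset.sum_eq_sum_iff_of_le fun j _ => hle j).1
    ((card_filter_eq_sum_card_filter_and _ (fun x => (h x).1) _).symm.trans hsum) i
    (Finset.mem_univ i)
  have hcard : Finset.card {y | (h y).1 = i} = α i := congrFun hfst i
  have hsub : ({y | (h y).1 = i ∧ (h y).2 < α i} : Finset Ω) ⊆ ({y | (h y).1 = i} : Finset Ω) :=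
    fun y => by simp +contextual
  have heq := Finset.eq_of_subset_of_card_le hsub (by rw [hcard, hrow, min_self])
  have hx : x ∈ ({y | (h y).1 = i} : Finset Ω) := by simp [hi]
  rw [← heq] at hx
  exact (Finset.mem_filter.1 hx).2.2

lemma content_of_equiv_diagram (hα : ∀ i, α i ≤ N) (e : Ω ≃ diagram N α) :
    content (fun x => (e x).1.1) = α ∧ content (fun x => (e x).1.2) = colLen N α :=
  ⟨funext fun i => (content_comp_val_comp_equiv e Prod.fst i).trans
    (card_filter_fst_diagram hα i),
   funext fun j => content_comp_val_comp_equiv e Prod.snd j⟩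

lemma card_injective_content_eq (hα : ∀ i, α i ≤ N) (hΩ : Fintype.card Ω = ∑ i, α i) :
    Finset.card {h : Ω → ι × Fin N |
      (content (Prod.fst ∘ h) = α ∧ content (Prod.snd ∘ h) = colLen N α) ∧
        Function.Injective h} = (Fintype.card Ω).factorial := by
  have hcard : Fintype.card Ω = Fintype.card (diagram N α) := by
    rw [hΩ, Fintype.card_coe, card_diagram hα]
  rw [← Fintype.card_equiv (Fintype.equivOfCardEq hcard), ← Finset.card_univ]
  symm
  refine Finset.card_nbij (fun e x => (e x).1) (fun e _ => ?_) (fun e _ e' _ h => ?_)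
    fun h hh => ?_
  · simpa using ⟨content_of_equiv_diagram hα e, Subtype.val_injective.comp e.injective⟩
  · exact Equiv.ext fun x => Subtype.ext (congrFun h x)
  · simp only [Finset.coe_filter, Finset.mem_univ, true_and, Set.mem_ofPred_eq] at hh
    obtain ⟨⟨hfst, hsnd⟩, hinj⟩ := hh
    let e : Ω → diagram N α := fun x =>
      ⟨h x, by simpa [diagram] using snd_lt_of_content_eq hα hinj hfst hsnd x⟩
    have he : Function.Bijective e := (Fintype.bijective_iff_injective_and_card e).2
      ⟨fun x y hxy => hinj (Subtype.ext_iff.1 hxy), hcard⟩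
    exact ⟨Equiv.ofBijective e he, Finset.mem_coe.2 (Finset.mem_univ _), rfl⟩

end GaleRyser

section SpechtCharacters

section CommonConstituent

variable {G : Type} [Group G] [Fintype G] {f g ψ : G → ℂ}

lemma exists_cinner_eq_natCast_sum_irr (hf : IsChar f) (hg : IsChar g) :
    ∃ a b : (G → ℂ) → ℕ, (∀ ψ ∈ irr G, cinner f ψ = a ψ ∧ cinner g ψ = b ψ) ∧
      cinner f g = (∑ ψ ∈ irr G, a ψ * b ψ : ℕ) := by
  choose! a ha using fun ψ (hψ : ψ ∈ irr G) => hf.exists_cinner_eq_natCast (mem_irr.1 hψ).isChar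
  choose! b hb using fun ψ (hψ : ψ ∈ irr G) => hg.exists_cinner_eq_natCast (mem_irr.1 hψ).isChar
  refine ⟨a, b, fun ψ hψ => ⟨ha ψ hψ, hb ψ hψ⟩, ?_⟩
  rw [cinner_eq_sum_irr f hg.mem_classFunctions]
  push_cast
  exact Finset.sum_congr rfl fun ψ hψ => by rw [ha ψ hψ, hb ψ hψ]

lemma exists_common_constituent (hf : IsChar f) (hg : IsChar g) (h : cinner f g = 1) :
    ∃ ψ ∈ irr G, cinner f ψ = 1 ∧ cinner g ψ = 1 := by
  obtain ⟨a, b, hab, hsum⟩ := exists_cinner_eq_natCast_sum_irr hf hg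
  have hone : ∑ ψ ∈ irr G, a ψ * b ψ = 1 := by exact_mod_cast hsum.symm.trans h
  obtain ⟨ψ, hψ, hne⟩ := Finset.exists_ne_zero_of_sum_ne_zero (hone.trans_ne one_ne_zero)
  have hle : a ψ * b ψ ≤ 1 :=
    (Finset.single_le_sum (f := fun θ => a θ * b θ) (fun _ _ => Nat.zero_le _) hψ).trans hone.le
  obtain ⟨ha, hb⟩ := mul_eq_one.1 (hle.antisymm (Nat.pos_of_ne_zero hne))
  exact ⟨ψ, hψ, by rw [(hab ψ hψ).1, ha, Nat.cast_one], by rw [(hab ψ hψ).2, hb, Nat.cast_one]⟩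

lemma cinner_ne_zero_of_common_constituent (hf : IsChar f) (hg : IsChar g) (hψ : ψ ∈ irr G)
    (hfψ : cinner f ψ ≠ 0) (hgψ : cinner g ψ ≠ 0) : cinner f g ≠ 0 := by
  obtain ⟨a, b, hab, hsum⟩ := exists_cinner_eq_natCast_sum_irr hf hg
  rw [(hab ψ hψ).1, Nat.cast_ne_zero] at hfψ
  rw [(hab ψ hψ).2, Nat.cast_ne_zero] at hgψ
  rw [hsum, Nat.cast_ne_zero]
  exact fun h => mul_ne_zero hfψ hgψ (Finset.sum_eq_zero_iff.1 h ψ hψ)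

end CommonConstituent

section Rows

variable {N : ℕ}

/-- The row lengths of a partition, as a composition indexed by its parts with multiplicity. -/
def rows (p : N.Partition) (i : p.parts.ToType) : ℕ := i.1

lemma map_rows_univ (p : N.Partition) : Finset.univ.val.map (rows p) = p.parts :=
  Multiset.map_univ_coe p.parts

lemma sum_rows (p : N.Partition) : ∑ i, rows p i = N :=
  (congrArg Multiset.sum (map_rows_univ p)).trans p.parts_sum

lemma rows_le (p : N.Partition) (i : p.parts.ToType) : rows p i ≤ N :=
  p.le_of_mem_parts Multiset.coe_mem

lemma count_add_colSum (p : N.Partition) (k : ℕ) :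
    p.parts.count (k + 1) + colSum (rows p) (k + 2) + colSum (rows p) k =
      2 * colSum (rows p) (k + 1) := by
  have hcount : p.parts.count (k + 1) = ∑ i, if k + 1 = rows p i then 1 else 0 := by
    rw [← Finset.card_filter]
    exact (congrArg (Multiset.count (k + 1)) (map_rows_univ p).symm).trans
      (Multiset.count_map _ _ _)
  simp only [hcount, colSum, ← Finset.sum_add_distrib, Finset.mul_sum]
  refine Finset.sum_congr rfl fun i _ => ?_
  split_ifs <;> omega

lemma colSum_rows_injective : Function.Injective fun p : N.Partition => colSum (rows p) := by
  intro p q h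
  refine Nat.Partition.ext (Multiset.ext.2 fun m => ?_)
  cases m with
  | zero =>
    rw [Multiset.count_eq_zero.2 fun h0 => (p.parts_pos h0).ne' rfl,
      Multiset.count_eq_zero.2 fun h0 => (q.parts_pos h0).ne' rfl]
  | succ k =>
    have hp := count_add_colSum p k
    have hq := count_add_colSum q k
    simp only at h
    rw [h] at hp
    omega

end Rows

variable {Ω : Type} [Fintype Ω]

lemma exists_spechtChar (p : (Fintype.card Ω).Partition) :
    ∃ ψ ∈ irr (Equiv.Perm Ω), cinner (youngChar Ω (rows p)) ψ = 1 ∧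
      cinner (signChar Ω * youngChar Ω (colLen (Fintype.card Ω) (rows p))) ψ = 1 := by
  refine exists_common_constituent (isChar_youngChar _)
    (isChar_signChar.mul (isChar_youngChar _)) ?_
  rw [cinner_youngChar_signChar_mul_youngChar,
    card_injective_content_eq (rows_le p) (sum_rows p).symm]
  exact inv_mul_cancel₀ (Nat.cast_ne_zero.2 (Nat.factorial_ne_zero _))

/-- The irreducible character of the symmetric group labelled by a partition, characterized as
the common constituent of the permutation character on the row tabloids and of the signed
permutation character on the column tabloids. -/
noncomputable def spechtChar (p : (Fintype.card Ω).Partition) : Equiv.Perm Ω → ℂ :=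
  (exists_spechtChar p).choose

lemma spechtChar_mem_irr (p : (Fintype.card Ω).Partition) :
    spechtChar p ∈ irr (Equiv.Perm Ω) :=
  (exists_spechtChar p).choose_spec.1

lemma cinner_youngChar_spechtChar (p : (Fintype.card Ω).Partition) :
    cinner (youngChar Ω (rows p)) (spechtChar p) = 1 :=
  (exists_spechtChar p).choose_spec.2.1

lemma cinner_signChar_mul_youngChar_spechtChar (p : (Fintype.card Ω).Partition) :
    cinner (signChar Ω * youngChar Ω (colLen (Fintype.card Ω) (rows p))) (spechtChar p) = 1 :=
  (exists_spechtChar p).choose_spec.2.2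

lemma colSum_rows_le_of_cinner_ne_zero {ι : Type} [Fintype ι] {α : ι → ℕ}
    {p : (Fintype.card Ω).Partition} (h : cinner (youngChar Ω α) (spechtChar p) ≠ 0) :
    colSum (rows p) ≤ colSum α := by
  have hne := cinner_ne_zero_of_common_constituent (isChar_youngChar α)
    (isChar_signChar.mul (isChar_youngChar _)) (spechtChar_mem_irr p) h
    ((cinner_signChar_mul_youngChar_spechtChar p).trans_ne one_ne_zero)
  rw [cinner_youngChar_signChar_mul_youngChar, mul_ne_zero_iff, Nat.cast_ne_zero,
    Finset.card_ne_zero] at hne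
  obtain ⟨g, hg⟩ := hne.2
  obtain ⟨⟨rfl, hsnd⟩, hinj⟩ := (Finset.mem_filter.1 hg).2
  exact colSum_le_colSum_content (rows_le p) hinj hsnd

lemma spechtChar_injective :
    Function.Injective (spechtChar : (Fintype.card Ω).Partition → Equiv.Perm Ω → ℂ) := by
  intro p q h
  refine colSum_rows_injective (le_antisymm (colSum_rows_le_of_cinner_ne_zero ?_)
    (colSum_rows_le_of_cinner_ne_zero ?_))
  · rw [h, cinner_youngChar_spechtChar]
    exact one_ne_zero
  · rw [← h, cinner_youngChar_spechtChar]
    exact one_ne_zero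

/-- The cycle type, fixed points included, of a conjugacy class of permutations. -/
noncomputable def classPartition : ConjClasses (Equiv.Perm Ω) → (Fintype.card Ω).Partition :=
  Quotient.lift Equiv.Perm.partition fun _ _ => Equiv.Perm.partition_eq_of_isConj.1

lemma classPartition_injective :
    Function.Injective (classPartition : ConjClasses (Equiv.Perm Ω) → _) := by
  rintro ⟨σ⟩ ⟨τ⟩ h
  exact ConjClasses.mk_eq_mk_iff_isConj.2 (Equiv.Perm.partition_eq_of_isConj.2 h)

lemma card_irr_perm_le :
    (irr (Equiv.Perm Ω)).card ≤ Fintype.card (Fintype.card Ω).Partition := by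
  rw [card_irr, ← Nat.card_eq_fintype_card]
  exact Nat.card_le_card_of_injective _ classPartition_injective

lemma image_spechtChar : Finset.univ.image spechtChar = irr (Equiv.Perm Ω) := by
  refine Finset.eq_of_subset_of_card_le (Finset.image_subset_iff.2 fun p _ =>
    spechtChar_mem_irr p) ?_
  rw [Finset.card_image_of_injective _ spechtChar_injective]
  exact card_irr_perm_le

lemma exists_spechtChar_eq {ψ : Equiv.Perm Ω → ℂ} (hψ : ψ ∈ irr (Equiv.Perm Ω)) :
    ∃ p, spechtChar p = ψ := by
  simpa [← image_spechtChar] using hψ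

end SpechtCharacters

section Straightening

open Finset.HasAntidiagonal (antidiagonal mem_antidiagonal)

variable {Ω ι : Type}

/-- Replace the entries `α a` and `α b` of a composition by `s.1` and `s.2`. -/
noncomputable def redistribute (α : ι → ℕ) (a b : ι) (s : ℕ × ℕ) : ι → ℕ :=
  Function.update (Function.update α a s.1) b s.2

lemma redistribute_apply (α : ι → ℕ) (a b : ι) (s : ℕ × ℕ) (i : ι) :
    redistribute α a b s i = if i = b then s.2 else if i = a then s.1 else α i := by
  simp only [redistribute, Function.update_apply]

/-- Identify the colour `b` with the colour `a`. -/
noncomputable def mergeColors (a b : ι) : ι → ι := Function.update id b a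

/-- Interchange the colours `a` and `b` on a subset. -/
noncomputable def swapOn (C : Finset Ω) (a b : ι) (f : Ω → ι) : Ω → ι :=
  C.piecewise (Equiv.swap a b ∘ f) f

lemma swapOn_swapOn (C : Finset Ω) (a b : ι) (f : Ω → ι) :
    swapOn C a b (swapOn C a b f) = f := by
  ext x
  by_cases hx : x ∈ C <;> simp [swapOn, hx]

lemma mergeColors_swap (a b i : ι) : mergeColors a b (Equiv.swap a b i) = mergeColors a b i := by
  simp only [mergeColors, Function.update_apply, Equiv.swap_apply_def]
  grind

lemma mergeColors_comp_swapOn (C : Finset Ω) (a b : ι) (f : Ω → ι) :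
    mergeColors a b ∘ swapOn C a b f = mergeColors a b ∘ f := by
  ext x
  by_cases hx : x ∈ C <;> simp [swapOn, hx, mergeColors_swap]

lemma mergeColors_eq_left_iff {a b j : ι} : mergeColors a b j = a ↔ j = a ∨ j = b := by
  simp only [mergeColors, Function.update_apply]
  grind

lemma mergeColors_ne_right {a b : ι} (hab : a ≠ b) (j : ι) : mergeColors a b j ≠ b := by
  simp only [mergeColors, Function.update_apply]
  grind

lemma mergeColors_eq_iff_of_ne {a b i j : ι} (hia : i ≠ a) (hib : i ≠ b) :
    mergeColors a b j = i ↔ j = i := by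
  simp only [mergeColors, Function.update_apply]
  grind

lemma apply_eq_of_sameCycle {σ : Equiv.Perm Ω} [Finite Ω] {f : Ω → ι} (hf : f ∘ σ = f) {x y : Ω}
    (h : σ.SameCycle x y) : f y = f x := by
  obtain ⟨n, rfl⟩ := h.exists_nat_pow_eq
  rw [Equiv.Perm.coe_pow]
  exact (Function.Semiconj.iterate_right (f := f) (gb := id) (congrFun hf) n x).trans (by simp)

lemma swapOn_comp_perm {σ : Equiv.Perm Ω} {C : Finset Ω} (hC : ∀ x, σ x ∈ C ↔ x ∈ C) (a b : ι)
    {f : Ω → ι} (hf : f ∘ σ = f) : swapOn C a b f ∘ σ = swapOn C a b f := by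
  ext x
  have hx : f (σ x) = f x := congrFun hf x
  by_cases hxC : x ∈ C <;> simp [swapOn, hC, hxC, hx]

variable [Fintype Ω]

lemma odd_card_sameCycle {σ : Equiv.Perm Ω} (hσ : Odd (orderOf σ)) (x : Ω) :
    Odd (Finset.card {y | σ.SameCycle x y}) := by
  have horbit : ({y | σ.SameCycle x y} : Finset Ω) =
      (MulAction.orbit (Subgroup.zpowers σ) x).toFinset := by
    ext y
    rw [Set.mem_toFinset, Finset.mem_filter_univ]
    simp [Equiv.Perm.SameCycle, MulAction.mem_orbit_iff, Subgroup.smul_def]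
  refine hσ.of_dvd_nat ?_
  rw [← Fintype.card_zpowers, horbit, Set.toFinset_card,
    ← MulAction.card_orbit_mul_card_stabilizer_eq_card_group (Subgroup.zpowers σ) x]
  exact dvd_mul_right _ _

lemma neg_one_pow_content (f : Ω → ι) (a : ι) :
    (-1 : ℂ) ^ content f a = ∏ x, if f x = a then -1 else 1 := by
  rw [content, ← Finset.prod_filter, Finset.prod_const]

lemma neg_one_pow_content_swapOn {a b : ι} (hab : a ≠ b) {f : Ω → ι} {C : Finset Ω}
    (hodd : Odd C.card) (hC : ∀ x ∈ C, f x = a ∨ f x = b) :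
    (-1 : ℂ) ^ content (swapOn C a b f) a = -(-1 : ℂ) ^ content f a := by
  calc (-1 : ℂ) ^ content (swapOn C a b f) a
      = ∏ x, (if x ∈ C then -1 else 1) * if f x = a then -1 else 1 := by
        rw [neg_one_pow_content]
        refine Finset.prod_congr rfl fun x _ => ?_
        by_cases hx : x ∈ C
        · rcases hC x hx with h | h <;> simp [swapOn, hx, h, hab.symm]
        · simp [swapOn, hx]
    _ = -(-1 : ℂ) ^ content f a := by
        rw [Finset.prod_mul_distrib, ← neg_one_pow_content]
        simp [hodd.neg_one_pow]

variable [Fintype ι]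

/-- Interchanging the colours `a` and `b` on the cycle of `σ` through `x` reverses signs, since
that cycle has odd length. -/
lemma sum_neg_one_pow_content_eq_zero {σ : Equiv.Perm Ω} (hσ : Odd (orderOf σ)) {a b : ι}
    (hab : a ≠ b) {g : Ω → ι} {x : Ω} (hx : g x = a) :
    ∑ f : Ω → ι with f ∘ σ = f ∧ mergeColors a b ∘ f = g, (-1 : ℂ) ^ content f a = 0 := by
  let C : Finset Ω := {y | σ.SameCycle x y}
  have hC : ∀ y, σ y ∈ C ↔ y ∈ C := by simp [C]
  have hneg : ∀ f : Ω → ι, f ∘ σ = f ∧ mergeColors a b ∘ f = g →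
      (-1 : ℂ) ^ content (swapOn C a b f) a = -(-1 : ℂ) ^ content f a := by
    rintro f ⟨hf, rfl⟩
    refine neg_one_pow_content_swapOn hab (odd_card_sameCycle hσ x) fun y hy => ?_
    rw [apply_eq_of_sameCycle hf (Finset.mem_filter.1 hy).2]
    exact mergeColors_eq_left_iff.1 hx
  refine Finset.sum_involution (fun f _ => swapOn C a b f) (fun f hf => ?_) (fun f hf h0 heq => ?_)
    (fun f hf => ?_) fun f _ => swapOn_swapOn C a b f
  · rw [hneg f (Finset.mem_filter.1 hf).2, add_neg_cancel]
  · exact h0 (self_eq_neg.1 (by simpa only [heq] using hneg f (Finset.mem_filter.1 hf).2))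
  · simp only [Finset.mem_filter, Finset.mem_univ, true_and] at hf ⊢
    exact ⟨swapOn_comp_perm hC a b hf.1, (mergeColors_comp_swapOn C a b f).trans hf.2⟩

omit [Fintype ι] in
lemma content_mergeColors_comp {a b : ι} (hab : a ≠ b) (f : Ω → ι) :
    content (mergeColors a b ∘ f) =
      redistribute (content f) a b (content f a + content f b, 0) := by
  ext i
  rw [redistribute_apply]
  split_ifs with hib hia
  · simp [content, hib, mergeColors_ne_right hab]
  · simp only [content, hia, Function.comp_apply, mergeColors_eq_left_iff]
    rw [Finset.filter_or, Finset.card_union_of_disjoint]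
    exact Finset.disjoint_filter.2 fun x _ ha hb => hab (ha.symm.trans hb)
  · simp only [content, Function.comp_apply, mergeColors_eq_iff_of_ne (i := i) hia hib]

omit [Fintype ι] in
lemma content_eq_redistribute_iff {α : ι → ℕ} {a b : ι} (hab : a ≠ b) {n : ℕ} {s : ℕ × ℕ}
    (hs : s.1 + s.2 = n) (f : Ω → ι) :
    content f = redistribute α a b s ↔
      content (mergeColors a b ∘ f) = redistribute α a b (n, 0) ∧
        (content f a, content f b) = s := by
  simp only [content_mergeColors_comp hab, funext_iff, redistribute_apply]
  grind

lemma sum_youngChar_redistribute (α : ι → ℕ) {a b : ι} (hab : a ≠ b) (n : ℕ)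
    (σ : Equiv.Perm Ω) :
    ∑ s ∈ antidiagonal n,
        (-1 : ℂ) ^ s.1 * youngChar Ω (redistribute α a b s) σ =
      ∑ f : Ω → ι with f ∘ σ = f ∧ content (mergeColors a b ∘ f) = redistribute α a b (n, 0),
        (-1 : ℂ) ^ content f a := by
  rw [← Finset.sum_fiberwise_of_maps_to (t := antidiagonal n)
    (g := fun f => (content f a, content f b))]
  · refine Finset.sum_congr rfl fun s hs => ?_
    rw [youngChar, mul_comm, ← nsmul_eq_mul, ← Finset.sum_const]
    refine Finset.sum_congr (Finset.ext fun f => ?_) fun f hf => ?_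
    · simp only [Finset.mem_filter, Finset.mem_univ, true_and,
        content_eq_redistribute_iff hab (mem_antidiagonal.1 hs)]
      grind
    · rw [← (Finset.mem_filter.1 hf).2]
  · intro f hf
    have ha := congrFun (Finset.mem_filter.1 hf).2.2 a
    simpa [content_mergeColors_comp hab, redistribute_apply, hab] using ha

theorem sum_youngChar_redistribute_eq_zero (α : ι → ℕ) {a b : ι} (hab : a ≠ b) {n : ℕ}
    (hn : n ≠ 0) {σ : Equiv.Perm Ω} (hσ : Odd (orderOf σ)) :
    ∑ s ∈ antidiagonal n,
      (-1 : ℂ) ^ s.1 * youngChar Ω (redistribute α a b s) σ = 0 := by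
  rw [sum_youngChar_redistribute α hab,
    ← Finset.sum_fiberwise (g := fun f => mergeColors a b ∘ f)]
  refine Finset.sum_eq_zero fun g _ => ?_
  rw [Finset.filter_filter]
  by_cases hg : content g = redistribute α a b (n, 0)
  · have hcard : content g a ≠ 0 := by
      rw [hg]
      simpa [redistribute, hab] using hn
    obtain ⟨x, hx⟩ := Finset.card_ne_zero.1 hcard
    rw [← sum_neg_one_pow_content_eq_zero hσ hab (Finset.mem_filter.1 hx).2]
    refine Finset.sum_congr (Finset.filter_congr fun f _ => ?_) fun _ _ => rfl
    grind
  · rw [Finset.filter_false_of_mem fun f _ => by grind, Finset.sum_empty]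

end Straightening

section SymmetricGroup

open Finset.HasAntidiagonal (antidiagonal mem_antidiagonal)

section ColSum

variable {ι : Type} [Fintype ι]

lemma colSum_update (α : ι → ℕ) (a : ι) (m k : ℕ) :
    colSum (Function.update α a m) k + min (α a) k = colSum α k + min m k := by
  simp only [colSum, ← Finset.add_sum_erase _ _ (Finset.mem_univ a), Function.update_self]
  rw [Finset.sum_congr rfl fun i hi => by rw [Function.update_of_ne (Finset.ne_of_mem_erase hi)]]
  omega

lemma colSum_redistribute (α : ι → ℕ) {a b : ι} (hab : a ≠ b) (s : ℕ × ℕ) (k : ℕ) :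
    colSum (redistribute α a b s) k + min (α a) k + min (α b) k =
      colSum α k + min s.1 k + min s.2 k := by
  have ha := colSum_update α a s.1 k
  have hb := colSum_update (Function.update α a s.1) b s.2 k
  rw [Function.update_of_ne hab.symm] at hb
  rw [redistribute]
  omega

lemma colSum_redistribute_lt {α : ι → ℕ} {a b : ι} (hab : a ≠ b) {m : ℕ} (ha : α a = m)
    (hb : α b = m) {s : ℕ × ℕ} (hs : s.1 + s.2 = 2 * m) (hne : s ≠ (m, m)) :
    colSum (redistribute α a b s) < colSum α := by
  have hcol := colSum_redistribute α hab s
  rw [ha, hb] at hcol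
  refine Pi.lt_def.2 ⟨fun k => ?_, m, ?_⟩
  · grind
  · have := hcol m
    grind

end ColSum

variable {Ω : Type} [Fintype Ω]

lemma youngChar_eq_sum {ι : Type} [Fintype ι] (α : ι → ℕ) :
    youngChar Ω α = ∑ q, cinner (youngChar Ω α) (spechtChar q) • spechtChar q := by
  rw [← Finset.sum_image (f := fun ψ => cinner (youngChar Ω α) ψ • ψ)
    spechtChar_injective.injOn, image_spechtChar,
    sum_irr_cinner_smul (isChar_youngChar α).mem_classFunctions]

section Unitriangularity

variable {M : Submodule ℤ (Equiv.Perm Ω → ℂ)} {ι : Type} [Fintype ι] {α : ι → ℕ}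

lemma twoReg_cinner_smul_spechtChar_mem {q : (Fintype.card Ω).Partition}
    (h : colSum (rows q) ≤ colSum α → twoReg (spechtChar q) ∈ M) :
    twoReg (cinner (youngChar Ω α) (spechtChar q) • spechtChar q) ∈ M := by
  obtain ⟨m, hm⟩ := (isChar_youngChar (Ω := Ω) α).exists_cinner_eq_natCast
    (mem_irr.1 (spechtChar_mem_irr q)).isChar
  rw [← coe_twoRegHom, map_smul, coe_twoRegHom]
  by_cases hzero : cinner (youngChar Ω α) (spechtChar q) = 0
  · rw [hzero, zero_smul]
    exact M.zero_mem
  · rw [hm, Nat.cast_smul_eq_nsmul]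
    exact nsmul_mem (h (colSum_rows_le_of_cinner_ne_zero hzero)) m

lemma twoReg_youngChar_mem
    (h : ∀ q : (Fintype.card Ω).Partition,
      colSum (rows q) ≤ colSum α → twoReg (spechtChar q) ∈ M) :
    twoReg (youngChar Ω α) ∈ M := by
  rw [youngChar_eq_sum, ← coe_twoRegHom, map_sum]
  exact M.sum_mem fun q _ => twoReg_cinner_smul_spechtChar_mem (h q)

lemma twoReg_youngChar_sub_spechtChar_mem {p : (Fintype.card Ω).Partition}
    (h : ∀ q : (Fintype.card Ω).Partition,
      colSum (rows q) < colSum (rows p) → twoReg (spechtChar q) ∈ M) :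
    twoReg (youngChar Ω (rows p) - spechtChar p) ∈ M := by
  rw [youngChar_eq_sum, ← Finset.add_sum_erase _ _ (Finset.mem_univ p),
    cinner_youngChar_spechtChar, one_smul, add_sub_cancel_left, ← coe_twoRegHom, map_sum]
  exact M.sum_mem fun q hq => twoReg_cinner_smul_spechtChar_mem fun hle =>
    h q (hle.lt_of_ne (colSum_rows_injective.ne (Finset.ne_of_mem_erase hq)))

end Unitriangularity

section Induction

variable {ι : Type} [Fintype ι]

lemma sum_twoReg_youngChar_redistribute (α : ι → ℕ) {a b : ι} (hab : a ≠ b) {n : ℕ}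
    (hn : n ≠ 0) :
    ∑ s ∈ antidiagonal n, (-1 : ℤ) ^ s.1 • twoReg (youngChar Ω (redistribute α a b s)) = 0 := by
  ext σ
  rw [Finset.sum_apply, Pi.zero_apply]
  by_cases hσ : Odd (orderOf σ)
  · rw [← sum_youngChar_redistribute_eq_zero α hab hn hσ]
    exact Finset.sum_congr rfl fun s _ => by simp [twoReg, hσ]
  · exact Finset.sum_eq_zero fun s _ => by simp [twoReg, hσ]

lemma twoReg_youngChar_mem_of_redistribute {M : Submodule ℤ (Equiv.Perm Ω → ℂ)} {α : ι → ℕ}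
    {a b : ι} (hab : a ≠ b) {m : ℕ} (hm : m ≠ 0) (ha : α a = m) (hb : α b = m)
    (h : ∀ s : ℕ × ℕ, s.1 + s.2 = 2 * m → s ≠ (m, m) →
      twoReg (youngChar Ω (redistribute α a b s)) ∈ M) :
    twoReg (youngChar Ω α) ∈ M := by
  have hα : redistribute α a b (m, m) = α := by
    ext i
    rw [redistribute_apply]
    grind
  have hsum := sum_twoReg_youngChar_redistribute (Ω := Ω) α hab (mul_ne_zero two_ne_zero hm)
  have hmem : (m, m) ∈ antidiagonal (2 * m) := mem_antidiagonal.2 (two_mul m).symm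
  rw [← Finset.add_sum_erase _ _ hmem, hα] at hsum
  have hneg : (-1 : ℤ) ^ m • twoReg (youngChar Ω α) ∈ M := by
    rw [eq_neg_of_add_eq_zero_left hsum]
    refine M.neg_mem (M.sum_mem fun s hs => M.smul_mem _ ?_)
    rw [Finset.mem_erase, mem_antidiagonal] at hs
    exact h s hs.2 hs.1
  rwa [M.smul_mem_iff_of_isUnit (isUnit_neg_one.pow m)] at hneg

lemma exists_rows_eq_of_notMem_distincts {n : ℕ} {p : n.Partition}
    (hp : p ∉ Nat.Partition.distincts n) :
    ∃ m ≠ 0, ∃ a b, a ≠ b ∧ rows p a = m ∧ rows p b = m := by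
  have hdup : ¬p.parts.Nodup := by simpa [Nat.Partition.distincts] using hp
  rw [Multiset.nodup_iff_count_le_one] at hdup
  push Not at hdup
  obtain ⟨m, hm⟩ := hdup
  refine ⟨m, (p.parts_pos (Multiset.count_pos.1 (zero_lt_one.trans hm))).ne',
    ⟨m, 0, zero_lt_one.trans hm⟩, ⟨m, 1, hm⟩, fun h => ?_, rfl, rfl⟩
  simpa using congrArg Fin.val (eq_of_heq (Sigma.mk.inj h).2)

lemma twoReg_spechtChar_mem_span (p : (Fintype.card Ω).Partition) :
    twoReg (spechtChar p) ∈ Submodule.span ℤ (twoReg ''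
      (spechtChar '' (Nat.Partition.distincts (Fintype.card Ω) : Set _))) := by
  induction p using (Finite.wellFounded_of_trans_of_irrefl
    fun q p : (Fintype.card Ω).Partition => colSum (rows q) < colSum (rows p)).induction with
  | _ p ih =>
  by_cases hp : p ∈ Nat.Partition.distincts (Fintype.card Ω)
  · exact Submodule.subset_span (Set.mem_image_of_mem _ (Set.mem_image_of_mem _ hp))
  · obtain ⟨m, hm, a, b, hab, ha, hb⟩ := exists_rows_eq_of_notMem_distincts hp
    have hyoung := twoReg_youngChar_mem_of_redistribute hab hm ha hb fun s hs hne =>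
      twoReg_youngChar_mem fun q hq =>
        ih q (hq.trans_lt (colSum_redistribute_lt hab ha hb hs hne))
    have hsub := twoReg_youngChar_sub_spechtChar_mem ih
    rw [← coe_twoRegHom, map_sub] at hsub
    simpa only [sub_sub_cancel, coe_twoRegHom] using Submodule.sub_mem _ hyoung hsub

end Induction

section CycleType

lemma odd_multiset_lcm {s : Multiset ℕ} (h : ∀ a ∈ s, Odd a) : Odd s.lcm := by
  induction s using Multiset.induction_on with
  | empty => simp
  | cons a s ih =>
    rw [Multiset.forall_mem_cons] at h
    rw [Multiset.lcm_cons]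
    exact (h.1.mul (ih h.2)).of_dvd_nat (lcm_dvd_mul a s.lcm)

lemma odd_orderOf_of_partition_mem_odds {σ : Equiv.Perm Ω}
    (h : σ.partition ∈ Nat.Partition.odds (Fintype.card Ω)) : Odd (orderOf σ) := by
  rw [← Equiv.Perm.lcm_cycleType]
  simp only [Nat.Partition.odds, Nat.Partition.restricted, Finset.mem_filter, Finset.mem_univ,
    true_and, Nat.not_even_iff_odd, Equiv.Perm.parts_partition, Multiset.mem_add] at h
  exact odd_multiset_lcm fun a ha => h a (Or.inl ha)

lemma parts_eq_filter_add_replicate {n : ℕ} (p : n.Partition) :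
    p.parts = p.parts.filter (2 ≤ ·) +
      Multiset.replicate (n - (p.parts.filter (2 ≤ ·)).sum) 1 := by
  have hones : p.parts.filter (¬2 ≤ ·) = Multiset.replicate (p.parts.filter (¬2 ≤ ·)).card 1 := by
    refine Multiset.eq_replicate_card.2 fun a ha => ?_
    obtain ⟨hmem, hlt⟩ := Multiset.mem_filter.1 ha
    have := p.parts_pos hmem
    omega
  have hparts := Multiset.filter_add_not (2 ≤ ·) p.parts
  rw [hones] at hparts
  have hsum := congrArg Multiset.sum hparts
  rw [Multiset.sum_add, Multiset.sum_replicate, smul_eq_mul, mul_one, p.parts_sum] at hsum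
  rw [← Nat.eq_sub_of_add_eq' hsum, hparts]

lemma exists_partition_eq (p : (Fintype.card Ω).Partition) :
    ∃ σ : Equiv.Perm Ω, σ.partition = p := by
  have hsum := congrArg Multiset.sum (Multiset.filter_add_not (2 ≤ ·) p.parts)
  rw [Multiset.sum_add, p.parts_sum] at hsum
  obtain ⟨σ, hσ⟩ := (Equiv.Perm.exists_with_cycleType_iff Ω (m := p.parts.filter (2 ≤ ·))).2
    ⟨(Nat.le_add_right _ _).trans_eq hsum, fun a ha => (Multiset.mem_filter.1 ha).2⟩
  refine ⟨σ, Nat.Partition.ext ?_⟩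
  rw [Equiv.Perm.parts_partition, ← Equiv.Perm.sum_cycleType, hσ,
    ← parts_eq_filter_add_replicate]

lemma card_odds_le_ncard_twoRegularClasses :
    (Nat.Partition.odds (Fintype.card Ω)).card ≤
      (twoRegularClasses (Equiv.Perm Ω)).ncard := by
  refine le_trans ?_ (Set.ncard_image_le (f := classPartition))
  rw [← Set.ncard_coe_finset]
  refine Set.ncard_le_ncard fun p hp => ?_
  obtain ⟨σ, rfl⟩ := exists_partition_eq p
  exact ⟨ConjClasses.mk σ, mk_mem_twoRegularClasses.2 (odd_orderOf_of_partition_mem_odds hp), rfl⟩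

end CycleType

variable (Ω) in
theorem isTwoBasicSet_spechtChar_distincts :
    IsTwoBasicSet (Equiv.Perm Ω)
      (spechtChar '' (Nat.Partition.distincts (Fintype.card Ω) : Set _)) := by
  refine isTwoBasicSet_of_ncard_le ?_ ?_ fun ψ hψ => ?_
  · rintro _ ⟨p, -, rfl⟩
    exact mem_irr.1 (spechtChar_mem_irr p)
  · rw [Set.ncard_image_of_injective _ spechtChar_injective, Set.ncard_coe_finset,
      ← Nat.Partition.card_odds_eq_card_distincts]
    exact card_odds_le_ncard_twoRegularClasses
  · obtain ⟨p, rfl⟩ := exists_spechtChar_eq (mem_irr.2 hψ)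
    exact twoReg_spechtChar_mem_span p

end SymmetricGroup

lemma exists_odd_perm_commuting {Ω : Type} [Fintype Ω] [DecidableEq Ω] {x : Equiv.Perm Ω}
    (hx : ¬Odd (orderOf x)) : ∃ σ ∉ alternatingGroup Ω, σ * x * σ⁻¹ = x := by
  by_contra! h
  refine hx ?_
  rw [← Equiv.Perm.lcm_cycleType]
  refine odd_multiset_lcm fun a ha =>
    Equiv.Perm.OnCycleFactors.odd_of_centralizer_le_alternatingGroup (fun σ hσ => ?_) a ha
  rw [Subgroup.mem_centralizer_singleton_iff] at hσ
  by_contra hA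
  exact h σ hA (mul_inv_eq_iff_eq_mul.2 hσ)

end TwoBasic

theorem An_has_twoBasicSet_general (Ω : Type) [Fintype Ω] [DecidableEq Ω] :
    ∃ B : Set (alternatingGroup Ω → ℂ), IsTwoBasicSet (alternatingGroup Ω) B := by
  cases subsingleton_or_nontrivial Ω
  · refine ⟨_, TwoBasic.isTwoBasicSet_of_odd_card ?_⟩
    rw [Nat.card_unique]
    exact odd_one
  · exact TwoBasic.exists_isTwoBasicSet_of_index_two alternatingGroup.index_eq_two
      (fun _ _ => TwoBasic.exists_odd_perm_commuting)
      (TwoBasic.isTwoBasicSet_spechtChar_distincts Ω)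

/-- For every positive integer n, the alternating group A_n possesses a
2-basic set. -/
theorem An_has_twoBasicSet (n : ℕ) (hn : 0 < n) :
    ∃ B : Set (alternatingGroup (Fin n) → ℂ),
      IsTwoBasicSet (alternatingGroup (Fin n)) B :=
  An_has_twoBasicSet_general (Fin n)
end

section
/- For every positive integer w, the virtual characters γ_χ := Ind_{S_w × S_w}^{S_{2w}}(χ ⊠ χ), as χ ranges over the irreducible complex characters of S_w, are ℤ-linearly independent elements of the group of virtual characters of S_{2w}. -/
open scoped Classical

/-- Induction of a class function `u` on `H` along a (typically injective) group
homomorphism `φ : H →* G`; for the inclusion of a subgroup this is the usual induced class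
function `Ind_H^G u (g) = |H|⁻¹ ∑_{x ∈ G, x⁻¹gx ∈ H} u (x⁻¹gx)`. -/
noncomputable def indHom {H G : Type*} [Group H] [Fintype H] [Group G] [Fintype G]
    (φ : H →* G) (u : H → ℂ) : G → ℂ :=
  fun g => (Nat.card H : ℂ)⁻¹ *
    ∑ x : G, ∑ h : H, if φ h = x⁻¹ * g * x then u h else 0

/-!
The Frobenius characteristic turns the induction product into multiplication of symmetric
polynomials, so it sends `Ind (χ ⊠ χ)` to the square of the characteristic of `χ`. The
characteristics of the irreducible characters have integral coefficients, and their `ℤ`-span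
contains every product `e_μ` of elementary symmetric polynomials, `e_k` being the characteristic of
the sign character of `S_k`. The `e_μ` are linearly independent over every field, and there are at
least as many partitions `μ` as irreducible characters, so the characteristics of the irreducible
characters remain independent modulo `2`. Over `𝔽₂`, squaring is the Frobenius endomorphism and
preserves linear independence; independence modulo `2` then lifts to `ℤ`.
-/

section LinearIndependence

theorem linearIndependent_of_forall_mem_span {K V ι κ : Type*} [DivisionRing K] [AddCommGroup V]
    [Module K V] [Fintype ι] [Fintype κ] {v : ι → V} {u : κ → V} (hu : LinearIndependent K u)
    (hmem : ∀ j, u j ∈ Submodule.span K (Set.range v))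
    (hcard : Fintype.card ι ≤ Fintype.card κ) : LinearIndependent K v := by
  have := FiniteDimensional.span_of_finite K (Set.finite_range v)
  rw [linearIndependent_iff_card_le_finrank_span]
  calc Fintype.card ι ≤ Fintype.card κ := hcard
    _ = Module.finrank K (Submodule.span K (Set.range u)) := (finrank_span_eq_card hu).symm
    _ ≤ Module.finrank K (Submodule.span K (Set.range v)) :=
      Submodule.finrank_mono (Submodule.span_le.2 (Set.range_subset_iff.2 hmem))

theorem linearIndependent_int_of_zmod {ι M N : Type*} [AddCommGroup M] [IsAddTorsionFree M]
    [AddCommGroup N] (p : ℕ) [Module (ZMod p) N] (hp : p ≠ 1) (f : M →+ N) {v : ι → M}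
    (hv : LinearIndependent (ZMod p) (f ∘ v)) : LinearIndependent ℤ v := by
  rw [linearIndependent_iff']
  intro s c hc i hi
  by_contra hci
  obtain ⟨d, hd, hd_gcd⟩ := Finset.extract_gcd c ⟨i, hi⟩
  have hgcd : s.gcd c ≠ 0 := fun h => hci (Finset.gcd_eq_zero_iff.1 h i hi)
  have hd_sum : ∑ j ∈ s, d j • v j = 0 := by
    refine (smul_eq_zero.1 ?_).resolve_left hgcd
    rw [Finset.smul_sum, ← hc]
    exact Finset.sum_congr rfl fun j hj => by rw [smul_smul, ← hd j hj]
  have hd_mod : ∑ j ∈ s, (d j : ZMod p) • (f ∘ v) j = 0 := by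
    simpa only [Int.cast_smul_eq_zsmul, Function.comp_apply, map_sum, map_zsmul, map_zero]
      using congrArg f hd_sum
  have hp_dvd : (p : ℤ) ∣ s.gcd d := Finset.dvd_gcd fun j hj =>
    (ZMod.intCast_zmod_eq_zero_iff_dvd _ _).1 (linearIndependent_iff'.1 hv s _ hd_mod j hj)
  rw [hd_gcd] at hp_dvd
  exact hp (by exact_mod_cast Int.eq_one_of_dvd_one (by positivity) hp_dvd)

theorem linearIndependent_pow_char {ι A : Type*} (p : ℕ) [Fact p.Prime] [CommRing A]
    [IsReduced A] [Algebra (ZMod p) A] {v : ι → A} (hv : LinearIndependent (ZMod p) v) :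
    LinearIndependent (ZMod p) fun i => v i ^ p := by
  rcases subsingleton_or_nontrivial A with hA | hA
  · rw [show (fun i => v i ^ p) = v from Subsingleton.elim _ _]
    exact hv
  have : CharP A p := charP_of_injective_algebraMap (algebraMap (ZMod p) A).injective p
  refine hv.map_of_injective_injective id (frobenius A p).toAddMonoidHom (fun r hr => hr)
    (fun a ha => ?_) fun r a => ?_
  · exact (pow_eq_zero_iff (Fact.out : p.Prime).ne_zero).1 ha
  · simp [frobenius_def, smul_pow, ZMod.pow_card]

end LinearIndependence

section Irreducible

variable {G : Type} [Group G]

theorem IsIrrChar.apply_conj {f : G → ℂ} (hf : IsIrrChar G f) (g h : G) :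
    f (h * g * h⁻¹) = f g := by
  obtain ⟨V, -, rfl⟩ := hf
  exact V.char_conj g h

theorem isIrrChar_character [Finite G] {V : Type} [AddCommGroup V] [Module ℂ V]
    [FiniteDimensional ℂ V] (ρ : Representation ℂ G V) [ρ.IsIrreducible] :
    IsIrrChar G ρ.character := by
  have := Fintype.ofFinite G
  have : Invertible (Nat.card G : ℂ) := invertibleOfNonzero (by simp)
  refine ⟨FDRep.of ρ, (FDRep.simple_iff_char_is_norm_one _).2 ?_, rfl⟩
  have hnorm := Representation.char_orthonormal ρ ρ
  rw [if_pos ⟨Representation.Equiv.refl ρ⟩, inv_mul_eq_one₀ (by simp)] at hnorm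
  exact hnorm.symm

theorem character_eq_add_of_isCompl {k V : Type*} [Field k] [AddCommGroup V] [Module k V]
    [FiniteDimensional k V] (ρ : Representation k G V) {σ τ : Subrepresentation ρ}
    (h : IsCompl σ.toSubmodule τ.toSubmodule) :
    ρ.character = σ.toRepresentation.character + τ.toRepresentation.character := by
  ext g
  have hinternal : DirectSum.IsInternal (fun b : Bool => (bif b then σ else τ).toSubmodule) :=
    (DirectSum.isInternal_submodule_iff_isCompl _ (i := true) (j := false) (by simp)
      (by ext b; cases b <;> simp)).2 h
  have htrace := LinearMap.trace_eq_sum_trace_restrict hinternal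
    fun b v hv => (bif b then σ else τ).apply_mem_toSubmodule g hv
  rwa [Fintype.sum_bool] at htrace

theorem exists_isCompl_of_not_isIrreducible {k V : Type*} [Field k] [Finite G]
    [NeZero (Nat.card G : k)] [AddCommGroup V] [Module k V] [Nontrivial V]
    (ρ : Representation k G V) (h : ¬ρ.IsIrreducible) :
    ∃ σ τ : Subrepresentation ρ, σ.toSubmodule ≠ ⊥ ∧ τ.toSubmodule ≠ ⊥ ∧
      IsCompl σ.toSubmodule τ.toSubmodule := by
  have : Nontrivial (Subrepresentation ρ) :=
    ⟨⊥, ⊤, fun h => bot_ne_top (α := Submodule k V) (congrArg Subrepresentation.toSubmodule h)⟩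
  obtain ⟨σ, hσ_bot, hσ_top⟩ : ∃ σ : Subrepresentation ρ, σ ≠ ⊥ ∧ σ ≠ ⊤ := by
    by_contra! hσ
    exact h ⟨fun σ => or_iff_not_imp_left.2 (hσ σ)⟩
  obtain ⟨τ, hστ⟩ := exists_isCompl σ
  refine ⟨σ, τ, fun h => hσ_bot (Subrepresentation.toSubmodule_injective h),
    fun h => hσ_top ?_, ?_⟩
  · have hτ : τ = ⊥ := Subrepresentation.toSubmodule_injective h
    rw [← hστ.sup_eq_top, hτ, sup_bot_eq]
  · rw [isCompl_iff, disjoint_iff, codisjoint_iff] at hστ ⊢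
    exact ⟨congrArg Subrepresentation.toSubmodule hστ.1,
      congrArg Subrepresentation.toSubmodule hστ.2⟩

theorem character_mem_span_irrChar [Finite G] {V : Type} [AddCommGroup V] [Module ℂ V]
    [FiniteDimensional ℂ V] (ρ : Representation ℂ G V) :
    ρ.character ∈ Submodule.span ℤ {f | IsIrrChar G f} := by
  induction hn : Module.finrank ℂ V using Nat.strong_induction_on generalizing V with
  | _ n ih =>
  by_cases hirr : ρ.IsIrreducible
  · exact Submodule.subset_span (isIrrChar_character ρ)
  rcases subsingleton_or_nontrivial V with hV | hV
  · have hzero : ρ.character = 0 := funext fun g => by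
      rw [Representation.character, Subsingleton.elim (ρ g) 0, map_zero, Pi.zero_apply]
    exact hzero ▸ zero_mem _
  have : NeZero (Nat.card G : ℂ) := ⟨Nat.cast_ne_zero.2 Nat.card_pos.ne'⟩
  obtain ⟨σ, τ, hσ, hτ, hcompl⟩ := exists_isCompl_of_not_isIrreducible ρ hirr
  have hadd := Submodule.finrank_add_eq_of_isCompl hcompl
  have hσ_pos := Submodule.one_le_finrank_iff.2 hσ
  have hτ_pos := Submodule.one_le_finrank_iff.2 hτ
  rw [character_eq_add_of_isCompl ρ hcompl]
  exact add_mem (ih _ (by lia) σ.toRepresentation rfl) (ih _ (by lia) τ.toRepresentation rfl)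

/-- The bilinear form `⟨f, u⟩ = |G|⁻¹ ∑ₓ f(x) u(x⁻¹)` as a linear functional of `f`; on characters
it is the usual scalar product. -/
noncomputable def charPairing {G : Type*} [Group G] [Fintype G] (u : G → ℂ) :
    Module.Dual ℂ (G → ℂ) :=
  (Nat.card G : ℂ)⁻¹ • ∑ x, u x⁻¹ • LinearMap.proj x

theorem IsIrrChar.charPairing_eq [Fintype G] {f u : G → ℂ} (hf : IsIrrChar G f)
    (hu : IsIrrChar G u) :
    charPairing u f = if f = u then 1 else 0 := by
  obtain ⟨V, _, rfl⟩ := hf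
  obtain ⟨W, _, rfl⟩ := hu
  have : Invertible (Nat.card G : ℂ) := invertibleOfNonzero (by simp)
  have hpair (U : FDRep ℂ G) [CategoryTheory.Simple U] :
      charPairing W.character U.character = if Nonempty (U ≅ W) then 1 else 0 := by
    simpa [charPairing, mul_comm] using FDRep.char_orthonormal U W
  by_cases h : Nonempty (V ≅ W)
  · rw [hpair, if_pos h, if_pos (FDRep.char_iso h.some)]
  · rw [hpair, if_neg h, if_neg]
    intro hVW
    have hself := hpair W
    rw [if_pos ⟨CategoryTheory.Iso.refl W⟩, ← congrArg (charPairing _) hVW, hpair V,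
      if_neg h] at hself
    exact zero_ne_one hself

variable (G) in
theorem linearIndependent_irrChar [Finite G] :
    LinearIndependent ℂ (fun χ : {f : G → ℂ // IsIrrChar G f} => χ.1) := by
  have := Fintype.ofFinite G
  refine .of_pairwise_dual_eq_zero_one _ (fun χ => charPairing χ.1) (fun χ ψ h => ?_) fun χ => ?_
  · beta_reduce
    rw [ψ.2.charPairing_eq χ.2, if_neg fun h' => h (Subtype.ext h'.symm)]
  · rw [χ.2.charPairing_eq χ.2, if_pos rfl]

end Irreducible

section Trace

theorem trace_pi {X R V : Type*} [Fintype X] [CommRing R] [AddCommGroup V] [Module R V]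
    [Module.Free R V] [Module.Finite R V] (T : (X → V) →ₗ[R] X → V) :
    LinearMap.trace R (X → V) T =
      ∑ x, LinearMap.trace R V (LinearMap.proj x ∘ₗ T ∘ₗ LinearMap.single R (fun _ => V) x) := by
  calc LinearMap.trace R (X → V) T
      = LinearMap.trace R (X → V)
          (∑ x, (T ∘ₗ LinearMap.single R (fun _ => V) x) ∘ₗ LinearMap.proj x) := by
        congr 1
        ext x v : 2
        simp [Pi.single_apply, apply_ite]
    _ = _ := by
        rw [map_sum]
        exact Finset.sum_congr rfl fun x _ => LinearMap.trace_comp_comm' _ _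

theorem character_ofMulAction {k G X : Type*} [Field k] [Group G] [Fintype X] [MulAction G X]
    (g : G) :
    (Representation.ofMulAction k G X).character g = Fintype.card {x : X // g • x = x} := by
  rw [Representation.character, LinearMap.trace_eq_matrix_trace k (MonoidAlgebra.basis X k),
    Matrix.trace, Fintype.card_subtype, ← Finset.sum_boole]
  refine Finset.sum_congr rfl fun x _ => ?_
  rw [Matrix.diag_apply, LinearMap.toMatrix_apply, MonoidAlgebra.basis_apply,
    Representation.ofMulAction_single]
  exact Finsupp.single_apply

variable {H G V : Type*} [Group H] [Fintype H] [Group G] [AddCommGroup V] [Module ℂ V]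

/-- The average over `h` of the operators `f ↦ (x ↦ σ h (f (φ h⁻¹ * x * g)))`: the projection of
`G → V` onto the coinduced representation, followed by the action of `g`. -/
noncomputable def averagedTranslation (φ : H →* G) (σ : Representation ℂ H V) (g : G) :
    (G → V) →ₗ[ℂ] G → V :=
  (Nat.card H : ℂ)⁻¹ • ∑ h, LinearMap.pi fun x => σ h ∘ₗ LinearMap.proj (φ h⁻¹ * x * g)

theorem averagedTranslation_apply (φ : H →* G) (σ : Representation ℂ H V) (g : G) (f : G → V)
    (x : G) :
    averagedTranslation φ σ g f x = (Nat.card H : ℂ)⁻¹ • ∑ h, σ h (f (φ h⁻¹ * x * g)) := by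
  simp [averagedTranslation]

theorem averagedTranslation_mem_coindV (φ : H →* G) (σ : Representation ℂ H V) (g : G)
    (f : G → V) : averagedTranslation φ σ g f ∈ Representation.coindV φ σ := by
  intro h x
  simp only [averagedTranslation_apply, map_smul, map_sum]
  rw [← Equiv.sum_comp (Equiv.mulLeft h)]
  simp [mul_assoc]

theorem averagedTranslation_restrict (φ : H →* G) (σ : Representation ℂ H V) (g : G) :
    (averagedTranslation φ σ g).restrict
      (fun f _ => averagedTranslation_mem_coindV φ σ g f) = Representation.coind φ σ g := by
  ext f x
  have hf (h : H) : σ h (f.1 (φ h⁻¹ * x * g)) = f.1 (x * g) := by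
    rw [mul_assoc, f.2, ← Module.End.mul_apply, ← map_mul, mul_inv_cancel, map_one,
      Module.End.one_apply]
  calc averagedTranslation φ σ g f.1 x = (Nat.card H : ℂ)⁻¹ • Nat.card H • f.1 (x * g) := by
        simp only [averagedTranslation_apply, hf, Finset.sum_const, Finset.card_univ,
          Nat.card_eq_fintype_card]
    _ = f.1 (x * g) := by
        rw [← Nat.cast_smul_eq_nsmul ℂ, inv_smul_smul₀ (by simp)]

theorem character_coind [Fintype G] [FiniteDimensional ℂ V] (φ : H →* G)
    (σ : Representation ℂ H V) :
    (Representation.coind φ σ).character = indHom φ σ.character := by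
  ext g
  rw [Representation.character, ← averagedTranslation_restrict,
    LinearMap.trace_restrict_eq_of_forall_mem, averagedTranslation, map_smul, smul_eq_mul, indHom,
    map_sum, Finset.sum_comm]
  congr 1
  refine Finset.sum_congr rfl fun h _ => ?_
  rw [trace_pi, ← Equiv.sum_comp (Equiv.inv G)]
  refine Finset.sum_congr rfl fun x _ => ?_
  have hfix : φ h⁻¹ * x⁻¹ * g = x⁻¹ ↔ φ h = x⁻¹ * g * x := by
    rw [map_inv, mul_assoc, inv_mul_eq_iff_eq_mul, eq_mul_inv_iff_mul_eq, eq_comm]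
  have hblock : LinearMap.proj x⁻¹ ∘ₗ
      (LinearMap.pi fun y => σ h ∘ₗ LinearMap.proj (φ h⁻¹ * y * g)) ∘ₗ
      LinearMap.single ℂ (fun _ => V) x⁻¹ = if φ h = x⁻¹ * g * x then σ h else 0 := by
    ext v
    have hv : Pi.single (M := fun _ => V) x⁻¹ v (φ h⁻¹ * x⁻¹ * g) =
        if φ h = x⁻¹ * g * x then v else 0 := by
      rw [Pi.single_apply, if_congr hfix rfl rfl]
    rw [LinearMap.comp_apply, LinearMap.comp_apply, LinearMap.single_apply, LinearMap.proj_apply,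
      LinearMap.pi_apply, LinearMap.comp_apply, LinearMap.proj_apply, hv]
    split_ifs <;> simp
  rw [Equiv.inv_apply, hblock, apply_ite (LinearMap.trace ℂ V), map_zero, Representation.character]

end Trace

section Induction

theorem exists_character_eq_indHom_mul {H K G : Type} [Group H] [Fintype H] [Group K] [Fintype K]
    [Group G] [Fintype G] (φ : H × K →* G) (V : FDRep ℂ H) (W : FDRep ℂ K) :
    ∃ U : FDRep ℂ G,
      U.character = indHom φ fun p => V.character p.1 * W.character p.2 := by
  have hcoind := character_coind φ (Representation.tprod (V.ρ.comp (MonoidHom.fst H K))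
    (W.ρ.comp (MonoidHom.snd H K)))
  rw [Representation.char_tensor] at hcoind
  exact ⟨.of (Representation.coind φ (Representation.tprod (V.ρ.comp (MonoidHom.fst H K))
    (W.ρ.comp (MonoidHom.snd H K)))), hcoind⟩

theorem IsIrrChar.indHom_mul_mem_span {H K G : Type} [Group H] [Fintype H] [Group K] [Fintype K]
    [Group G] [Fintype G] (φ : H × K →* G) {χ : H → ℂ} {ψ : K → ℂ} (hχ : IsIrrChar H χ)
    (hψ : IsIrrChar K ψ) :
    indHom φ (fun p => χ p.1 * ψ p.2) ∈ Submodule.span ℤ {f | IsIrrChar G f} := by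
  obtain ⟨V, _, rfl⟩ := hχ
  obtain ⟨W, _, rfl⟩ := hψ
  obtain ⟨U, hU⟩ := exists_character_eq_indHom_mul φ V W
  exact hU ▸ character_mem_span_irrChar U.ρ

/-- Frobenius reciprocity for the average of a class function `Ψ` against an induced function. -/
theorem sum_indHom_smul {H G M : Type*} [Group H] [Fintype H] [Group G] [Fintype G]
    [AddCommGroup M] [Module ℂ M] (φ : H →* G) (u : H → ℂ) {Ψ : G → M}
    (hΨ : ∀ g k, Ψ (k * g * k⁻¹) = Ψ g) :
    (Nat.card G : ℂ)⁻¹ • ∑ g, indHom φ u g • Ψ g =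
      (Nat.card H : ℂ)⁻¹ • ∑ h, u h • Ψ (φ h) := by
  have hsum (x : G) (h : H) :
      ∑ g, (if φ h = x⁻¹ * g * x then u h else 0) • Ψ g = u h • Ψ (φ h) := by
    have hconj (g : G) : φ h = x⁻¹ * g * x ↔ g = x * φ h * x⁻¹ := by
      rw [eq_mul_inv_iff_mul_eq, mul_assoc x⁻¹, eq_inv_mul_iff_mul_eq, eq_comm]
    simp only [hconj, ite_smul, zero_smul, Finset.sum_ite_eq', Finset.mem_univ, if_true, hΨ]
  calc (Nat.card G : ℂ)⁻¹ • ∑ g, indHom φ u g • Ψ g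
      = (Nat.card G : ℂ)⁻¹ • (Nat.card H : ℂ)⁻¹ • ∑ x : G, ∑ h, ∑ g,
          (if φ h = x⁻¹ * g * x then u h else 0) • Ψ g := by
        simp only [indHom, mul_smul, Finset.sum_smul, ← Finset.smul_sum]
        rw [Finset.sum_comm]
        exact congrArg _ (congrArg _ (Finset.sum_congr rfl fun x _ => Finset.sum_comm))
    _ = (Nat.card G : ℂ)⁻¹ • Nat.card G • (Nat.card H : ℂ)⁻¹ • ∑ h, u h • Ψ (φ h) := by
        simp only [hsum, Finset.sum_const, Finset.card_univ, Nat.card_eq_fintype_card,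
          smul_comm (Fintype.card G)]
    _ = (Nat.card H : ℂ)⁻¹ • ∑ h, u h • Ψ (φ h) := by
        rw [← Nat.cast_smul_eq_nsmul ℂ, inv_smul_smul₀ (by simp)]

theorem exists_natCast_eq_average_mul_card_fixed {G X V : Type*} [Group G] [Fintype G]
    [Fintype X] [MulAction G X] [AddCommGroup V] [Module ℂ V] [FiniteDimensional ℂ V]
    (ρ : Representation ℂ G V) :
    ∃ n : ℕ, (n : ℂ) = (Nat.card G : ℂ)⁻¹ *
      ∑ g, ρ.character g * Fintype.card {x : X // g • x = x} := by
  have : Invertible (Nat.card G : ℂ) := invertibleOfNonzero (by simp)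
  have hinv := Representation.card_inv_mul_sum_char_eq_finrank
    (Representation.tprod ρ (Representation.ofMulAction ℂ G X))
  simp only [Representation.char_tensor, Pi.mul_apply, character_ofMulAction] at hinv
  exact ⟨_, hinv.symm⟩

end Induction

section PermIrreducible

variable {α : Type}

theorem exists_comp_partition_eq [Fintype α] [DecidableEq α] {f : Equiv.Perm α → ℂ}
    (hf : ∀ g h, f (h * g * h⁻¹) = f g) :
    ∃ f' : (Fintype.card α).Partition → ℂ, f' ∘ Equiv.Perm.partition = f := by
  have hfactors : f.FactorsThrough Equiv.Perm.partition := fun g h hgh => by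
    obtain ⟨k, hk⟩ := isConj_iff.1 (Equiv.Perm.partition_eq_of_isConj.2 hgh)
    rw [← hk, hf]
  obtain ⟨f', hf'⟩ := (Function.factorsThrough_iff f).1 hfactors
  exact ⟨f', hf'.symm⟩

theorem exists_linearIndependent_irrChar_partition (α : Type) [Fintype α] :
    ∃ v : {f : Equiv.Perm α → ℂ // IsIrrChar (Equiv.Perm α) f} →
      (Fintype.card α).Partition → ℂ, LinearIndependent ℂ v := by
  choose v hv using fun χ : {f : Equiv.Perm α → ℂ // IsIrrChar (Equiv.Perm α) f} =>
    exists_comp_partition_eq χ.2.apply_conj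
  refine ⟨v, .of_comp (LinearMap.funLeft ℂ ℂ Equiv.Perm.partition) ?_⟩
  convert! linearIndependent_irrChar (Equiv.Perm α)
  exact funext hv

instance finite_irrChar_perm [Finite α] :
    Finite {f : Equiv.Perm α → ℂ // IsIrrChar (Equiv.Perm α) f} :=
  have := Fintype.ofFinite α
  (exists_linearIndependent_irrChar_partition α).choose_spec.finite

theorem card_irrChar_perm_le [Fintype α]
    [Fintype {f : Equiv.Perm α → ℂ // IsIrrChar (Equiv.Perm α) f}] :
    Fintype.card {f : Equiv.Perm α → ℂ // IsIrrChar (Equiv.Perm α) f} ≤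
      Fintype.card (Fintype.card α).Partition := by
  obtain ⟨v, hv⟩ := exists_linearIndependent_irrChar_partition α
  simpa only [Module.finrank_fintype_fun_eq_card] using hv.fintype_card_le_finrank

end PermIrreducible

section FrobeniusCharacteristic

open MvPolynomial

variable {α β : Type} [Fintype α] [DecidableEq α] [Fintype β] [DecidableEq β]
variable (κ : Type) [Fintype κ]

/-- The generating polynomial of the colorings `α → κ` fixed by `g`: the power sum symmetric
polynomial of the cycle type of `g`. -/
noncomputable def coloringPoly (g : Equiv.Perm α) : MvPolynomial κ ℂ :=
  ∑ c : α → κ with c ∘ g = c, ∏ i, X (c i)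

theorem coloringPoly_permCongr (e : α ≃ β) (g : Equiv.Perm α) :
    coloringPoly κ (e.permCongr g) = coloringPoly κ g := by
  refine Finset.sum_equiv (Equiv.arrowCongr e.symm (Equiv.refl κ)) (fun c => ?_) fun c _ => ?_
  · simp only [Finset.mem_filter, Finset.mem_univ, true_and, funext_iff, Function.comp_apply,
      Equiv.arrowCongr_apply, Equiv.coe_refl, id, Equiv.symm_symm, Equiv.permCongr_apply]
    rw [← e.forall_congr_right]
    simp only [Equiv.symm_apply_apply]
  · exact (Equiv.prod_comp e fun i => (X (c i) : MvPolynomial κ ℂ)).symm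

theorem coloringPoly_conj (g k : Equiv.Perm α) :
    coloringPoly κ (k * g * k⁻¹) = coloringPoly κ g := by
  rw [← Equiv.permCongr_eq_mul, coloringPoly_permCongr]

theorem coloringPoly_sumCongr (g : Equiv.Perm α) (h : Equiv.Perm β) :
    coloringPoly κ (Equiv.Perm.sumCongr g h) = coloringPoly κ g * coloringPoly κ h := by
  rw [coloringPoly, coloringPoly, coloringPoly, Finset.sum_mul_sum, ← Finset.sum_product']
  refine Finset.sum_equiv (Equiv.sumArrowEquivProdArrow α β κ) (fun c => ?_) fun c _ => ?_
  · simp [funext_iff, Equiv.sumArrowEquivProdArrow]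
  · simp [Equiv.sumArrowEquivProdArrow]

/-- The Frobenius characteristic of a function on the permutations of `α`, as a symmetric
polynomial in variables indexed by `κ`. -/
noncomputable def frobeniusChar : (Equiv.Perm α → ℂ) →ₗ[ℂ] MvPolynomial κ ℂ :=
  (Nat.card (Equiv.Perm α) : ℂ)⁻¹ • Fintype.linearCombination ℂ (coloringPoly κ)

theorem frobeniusChar_apply (f : Equiv.Perm α → ℂ) :
    frobeniusChar κ f = (Nat.card (Equiv.Perm α) : ℂ)⁻¹ • ∑ g, f g • coloringPoly κ g := rfl

theorem frobeniusChar_comp_permCongr (e : α ≃ β) (f : Equiv.Perm β → ℂ) :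
    frobeniusChar κ (f ∘ e.permCongr) = frobeniusChar κ f := by
  rw [frobeniusChar_apply, frobeniusChar_apply, Nat.card_congr e.permCongr,
    ← Equiv.sum_comp e.permCongr]
  simp only [Function.comp_apply, coloringPoly_permCongr]

theorem frobeniusChar_indHom (χ : Equiv.Perm α → ℂ) (ψ : Equiv.Perm β → ℂ) :
    frobeniusChar κ (indHom (Equiv.Perm.sumCongrHom α β) fun p => χ p.1 * ψ p.2) =
      frobeniusChar κ χ * frobeniusChar κ ψ := by
  rw [frobeniusChar_apply, sum_indHom_smul _ _ (coloringPoly_conj κ), frobeniusChar_apply,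
    frobeniusChar_apply, smul_mul_smul_comm, Finset.sum_mul_sum, Fintype.sum_prod_type,
    Nat.card_prod, Nat.cast_mul, mul_inv]
  congr 1
  refine Finset.sum_congr rfl fun g _ => Finset.sum_congr rfl fun h _ => ?_
  rw [smul_mul_smul_comm, ← coloringPoly_sumCongr]
  rfl

variable (α) {κ} in
/-- The colorings of `α` that use each color `k` exactly `m k` times. -/
def Coloring (m : κ →₀ ℕ) : Type :=
  {c : α → κ // ∑ i, Finsupp.single (c i) 1 = m}

noncomputable instance (m : κ →₀ ℕ) : Fintype (Coloring α m) :=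
  inferInstanceAs (Fintype {c : α → κ // ∑ i, Finsupp.single (c i) 1 = m})

instance (m : κ →₀ ℕ) : MulAction (Equiv.Perm α) (Coloring α m) where
  smul g c := ⟨c.1 ∘ g.symm,
    (Equiv.sum_comp g.symm fun i => Finsupp.single (c.1 i) 1).trans c.2⟩
  one_smul _ := rfl
  mul_smul _ _ _ := rfl

variable {κ} in
omit [DecidableEq α] [Fintype κ] in
theorem Coloring.smul_eq_self_iff {m : κ →₀ ℕ} (g : Equiv.Perm α) (c : Coloring α m) :
    g • c = c ↔ c.1 ∘ g = c.1 := by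
  rw [eq_comm (b := c.1), ← Equiv.comp_symm_eq]
  exact Subtype.ext_iff

theorem coeff_coloringPoly (m : κ →₀ ℕ) (g : Equiv.Perm α) :
    (coloringPoly κ g).coeff m = Fintype.card {c : Coloring α m // g • c = c} := by
  have hcard : Fintype.card {c : Coloring α m // g • c = c} =
      Finset.card {c : α → κ | c ∘ g = c ∧ ∑ i, Finsupp.single (c i) 1 = m} := by
    rw [← Fintype.card_subtype]
    refine Fintype.card_congr ((Equiv.subtypeEquivRight (Coloring.smul_eq_self_iff g)).trans
      ((Equiv.subtypeSubtypeEquivSubtypeInter _ fun c : α → κ => c ∘ g = c).trans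
        (Equiv.subtypeEquivRight fun _ => and_comm)))
  simp only [coloringPoly, X, ← monomial_sum_one, coeff_sum, coeff_monomial]
  rw [Finset.sum_boole, Finset.filter_filter, hcard]

theorem exists_map_eq_frobeniusChar (V : FDRep ℂ (Equiv.Perm α)) :
    ∃ P : MvPolynomial κ ℤ, map (Int.castRingHom ℂ) P = frobeniusChar κ V.character := by
  rw [← Set.mem_range, mem_range_map_iff_coeffs_subset]
  intro z hz
  obtain ⟨m, -, rfl⟩ := mem_coeffs_iff.1 hz
  obtain ⟨n, hn⟩ := exists_natCast_eq_average_mul_card_fixed (X := Coloring α m) V.ρ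
  refine ⟨n, ?_⟩
  simp only [frobeniusChar_apply, coeff_smul, coeff_sum, coeff_coloringPoly, smul_eq_mul]
  exact hn

theorem IsIrrChar.exists_map_eq_frobeniusChar {χ : Equiv.Perm α → ℂ}
    (hχ : IsIrrChar (Equiv.Perm α) χ) :
    ∃ P : MvPolynomial κ ℤ, map (Int.castRingHom ℂ) P = frobeniusChar κ χ := by
  obtain ⟨V, -, rfl⟩ := hχ
  exact _root_.exists_map_eq_frobeniusChar κ V

/-- The sign representation on the one-dimensional space `ℂ`. -/
noncomputable def signRep (α : Type) [Fintype α] [DecidableEq α] :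
    FDRep ℂ (Equiv.Perm α) :=
  FDRep.of (((algebraMap ℂ (Module.End ℂ ℂ)).comp (Int.castRingHom ℂ)).toMonoidHom.comp
    ((Units.coeHom ℤ).comp Equiv.Perm.sign))

theorem character_signRep (g : Equiv.Perm α) :
    (signRep α).character g = (Equiv.Perm.sign g : ℤ) := by
  change LinearMap.trace ℂ ℂ (algebraMap ℂ (Module.End ℂ ℂ) ((Equiv.Perm.sign g : ℤ) : ℂ)) = _
  rw [Algebra.algebraMap_eq_smul_one, map_smul, LinearMap.trace_one, Module.finrank_self,
    Nat.cast_one, smul_eq_mul, mul_one]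

theorem sum_sign_stabilizer {R X : Type*} [Ring R] (c : α → X) :
    ∑ g : Equiv.Perm α, (if c ∘ g = c then ((Equiv.Perm.sign g : ℤ) : R) else 0) =
      if Function.Injective c then 1 else 0 := by
  split_ifs with hc
  · have hfix (g : Equiv.Perm α) : c ∘ g = c ↔ g = 1 := by
      simp only [_root_.funext_iff, Function.comp_apply, hc.eq_iff,
        Equiv.ext_iff, Equiv.Perm.one_apply]
    simp [hfix]
  · simp only [Function.Injective, not_forall] at hc
    obtain ⟨a, b, hab, hne⟩ := hc
    have hswap : c ∘ Equiv.swap a b = c := by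
      rw [Equiv.comp_swap_eq_update, hab, Function.update_eq_self, ← hab, Function.update_eq_self]
    have hfix (g : Equiv.Perm α) : c ∘ ⇑(Equiv.swap a b * g) = c ∘ g := by
      rw [Equiv.Perm.coe_mul, ← Function.comp_assoc, hswap]
    refine Finset.sum_involution (fun g _ => Equiv.swap a b * g) (fun g _ => ?_)
      (fun g _ _ => ?_) (fun g _ => Finset.mem_univ _)
      fun g _ => Equiv.swap_mul_self_mul a b g
    · rw [hfix]
      split_ifs <;> simp [Equiv.Perm.sign_swap hne]
    · simp [Equiv.swap_eq_one_iff, hne]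

omit [DecidableEq α] in
theorem sum_embedding_map {M : Type*} [AddCommMonoid M] (F : Finset κ → M) :
    ∑ c : α ↪ κ, F (Finset.univ.map c) =
      Nat.card (Equiv.Perm α) •
        ∑ t ∈ Finset.powersetCard (Fintype.card α) Finset.univ, F t := by
  have hmaps : ∀ c : α ↪ κ, c ∈ Finset.univ →
      Finset.univ.map c ∈ Finset.powersetCard (Fintype.card α) Finset.univ := fun c _ => by
    rw [Finset.mem_powersetCard_univ, Finset.card_map, Finset.card_univ]
  rw [← Finset.sum_fiberwise_of_maps_to hmaps, Finset.smul_sum]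
  refine Finset.sum_congr rfl fun t ht => ?_
  have ht_card : t.card = Fintype.card α := (Finset.mem_powersetCard.1 ht).2
  have hmap (c : α ↪ κ) : Finset.univ.map c = t ↔ ∀ a, c a ∈ (t : Set κ) := by
    rw [← Finset.subset_iff_eq_of_card_le (by rw [ht_card, Finset.card_map, Finset.card_univ])]
    simp [Finset.subset_iff]
  have hcount : Fintype.card {c : α ↪ κ // Finset.univ.map c = t} = Nat.card (Equiv.Perm α) := by
    rw [Fintype.card_congr ((Equiv.subtypeEquivRight hmap).trans (Equiv.codRestrict α _)),
      Fintype.card_embedding_eq, Nat.card_perm, Nat.card_eq_fintype_card, ← Set.toFinset_card,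
      Finset.toFinset_coe, ht_card, Nat.descFactorial_self]
  rw [Finset.sum_congr rfl fun c hc => congrArg F (Finset.mem_filter.1 hc).2, Finset.sum_const,
    ← Fintype.card_subtype, hcount]

theorem frobeniusChar_signRep :
    frobeniusChar κ (signRep α).character = esymm κ ℂ (Fintype.card α) := by
  have hcard : (Nat.card (Equiv.Perm α) : ℂ) ≠ 0 := Nat.cast_ne_zero.2 Nat.card_pos.ne'
  calc frobeniusChar κ (signRep α).character
      = (Nat.card (Equiv.Perm α) : ℂ)⁻¹ • ∑ c : α → κ,
          (∑ g : Equiv.Perm α, if c ∘ g = c then ((Equiv.Perm.sign g : ℤ) : ℂ) else 0) •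
            ∏ i, X (c i) := by
        simp only [frobeniusChar_apply, character_signRep, coloringPoly, Finset.smul_sum,
          Finset.sum_smul, Finset.sum_filter, ite_smul, smul_ite, zero_smul, smul_zero]
        rw [Finset.sum_comm]
    _ = (Nat.card (Equiv.Perm α) : ℂ)⁻¹ • ∑ c : α ↪ κ, ∏ i, X (c i) := by
        simp only [sum_sign_stabilizer, ite_smul, one_smul, zero_smul]
        rw [← Finset.sum_filter, Finset.sum_subtype _ fun _ => Finset.mem_filter_univ _]
        exact congrArg _ ((Equiv.subtypeInjectiveEquivEmbedding α κ).sum_comp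
          fun c => ∏ i, (X (c i) : MvPolynomial κ ℂ))
    _ = (Nat.card (Equiv.Perm α) : ℂ)⁻¹ • ∑ c : α ↪ κ, ∏ k ∈ Finset.univ.map c, X k := by
        simp only [Finset.prod_map]
    _ = esymm κ ℂ (Fintype.card α) := by
        rw [sum_embedding_map κ fun t => ∏ k ∈ t, (X k : MvPolynomial κ ℂ),
          ← Nat.cast_smul_eq_nsmul ℂ, inv_smul_smul₀ hcard, esymm]

theorem exists_frobeniusChar_eq_prod_esymm (s : Multiset ℕ) :
    ∀ (α : Type) [Fintype α] [DecidableEq α], s.sum = Fintype.card α →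
      ∃ V : FDRep ℂ (Equiv.Perm α),
        frobeniusChar κ V.character = (s.map (esymm κ ℂ)).prod := by
  induction s using Multiset.induction with
  | empty =>
    intro α _ _ hs
    refine ⟨signRep α, ?_⟩
    rw [frobeniusChar_signRep, ← hs, Multiset.sum_zero, esymm_zero, Multiset.map_zero,
      Multiset.prod_zero]
  | cons k s ih =>
    intro α _ _ hs
    obtain ⟨W, hW⟩ := ih (Fin s.sum) (Fintype.card_fin _).symm
    obtain ⟨U, hU⟩ := exists_character_eq_indHom_mul
      (Equiv.Perm.sumCongrHom (Fin k) (Fin s.sum)) (signRep (Fin k)) W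
    have e : α ≃ Fin k ⊕ Fin s.sum := Fintype.equivOfCardEq (by simp [← hs])
    refine ⟨FDRep.of (U.ρ.comp e.permCongrHom.toMonoidHom), ?_⟩
    calc frobeniusChar κ (FDRep.of (U.ρ.comp e.permCongrHom.toMonoidHom)).character
        = frobeniusChar κ U.character := frobeniusChar_comp_permCongr κ e U.character
      _ = esymm κ ℂ k * (s.map (esymm κ ℂ)).prod := by
          rw [hU, frobeniusChar_indHom, hW, frobeniusChar_signRep, Fintype.card_fin]
      _ = ((k ::ₘ s).map (esymm κ ℂ)).prod := by
          rw [Multiset.map_cons, Multiset.prod_cons]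

end FrobeniusCharacteristic

section ElementarySymmetric

open MvPolynomial

theorem algebraicIndependent_esymm (σ R : Type*) [Fintype σ] [CommRing R] {n : ℕ}
    (hn : n ≤ Fintype.card σ) : AlgebraicIndependent R fun i : Fin n => esymm σ R (i + 1) := by
  rw [algebraicIndependent_iff_injective_aeval]
  intro p q hpq
  apply esymmAlgHom_injective R hn
  rwa [Subtype.ext_iff, esymmAlgHom_apply, esymmAlgHom_apply]

theorem linearIndependent_multiset_prod {ι R A : Type*} [CommRing R] [CommRing A] [Algebra R A]
    {x : ι → A} (hx : AlgebraicIndependent R x) :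
    LinearIndependent R fun s : Multiset ι => (s.map x).prod := by
  have hmonomial := ((basisMonomials ι R).linearIndependent.map' (aeval x).toLinearMap
    (LinearMap.ker_eq_bot.2 hx)).comp _ Multiset.toFinsupp.injective
  convert! hmonomial using 2 with s
  simp [aeval_monomial, Finsupp.prod, Finset.prod_multiset_map_count]

theorem linearIndependent_esymmPart (σ R : Type*) [Fintype σ] [CommRing R] {n : ℕ}
    (hn : n ≤ Fintype.card σ) :
    LinearIndependent R fun μ : n.Partition => esymmPart σ R μ := by
  have hlift : CanLift ℕ (Fin n) (fun i => i + 1) fun k => 0 < k ∧ k ≤ n :=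
    ⟨fun k hk => ⟨⟨k - 1, by lia⟩, Nat.sub_add_cancel hk.1⟩⟩
  have hparts (μ : n.Partition) :
      ∃ s : Multiset (Fin n), s.map (fun i : Fin n => (i + 1 : ℕ)) = μ.parts :=
    CanLift.prf μ.parts fun _ hk => ⟨μ.parts_pos hk, μ.le_of_mem_parts hk⟩
  choose s hs using hparts
  have hs_inj : Function.Injective s := fun μ ν h => by
    rw [Nat.Partition.ext_iff, ← hs, ← hs, h]
  convert! (linearIndependent_multiset_prod (algebraicIndependent_esymm σ R hn)).comp s hs_inj
    using 2 with μ
  simp only [esymmPart, ← hs, Multiset.map_map, Function.comp_apply]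

theorem map_esymmPart {σ R S : Type*} [Fintype σ] [CommRing R] [CommRing S] (f : R →+* S)
    {n : ℕ} (μ : n.Partition) : map f (esymmPart σ R μ) = esymmPart σ S μ := by
  simp only [esymmPart, map_multiset_prod, Multiset.map_map, Function.comp_apply, map_esymm]

end ElementarySymmetric

section IntegralLift

open MvPolynomial

variable {α κ : Type} [Fintype α] [DecidableEq α] [Fintype κ]
  {P : {f : Equiv.Perm α → ℂ // IsIrrChar (Equiv.Perm α) f} → MvPolynomial κ ℤ}

theorem esymmPart_mem_span (hP : ∀ χ, map (Int.castRingHom ℂ) (P χ) = frobeniusChar κ χ.1)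
    (μ : (Fintype.card α).Partition) :
    esymmPart κ ℤ μ ∈ Submodule.span ℤ (Set.range P) := by
  let mapC : MvPolynomial κ ℤ →ₗ[ℤ] MvPolynomial κ ℂ :=
    (map (Int.castRingHom ℂ)).toIntAlgHom.toLinearMap
  have hmapC : Function.Injective mapC := map_injective _ Int.cast_injective
  obtain ⟨V, hV⟩ := exists_frobeniusChar_eq_prod_esymm κ μ.parts α μ.parts_sum
  have hspan := Submodule.mem_map_of_mem (f := (frobeniusChar κ).restrictScalars ℤ)
    (character_mem_span_irrChar V.ρ)
  have himage : (frobeniusChar κ).restrictScalars ℤ '' {f | IsIrrChar (Equiv.Perm α) f} =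
      mapC '' Set.range P := by
    rw [← Set.range_comp, ← Subtype.range_coe_subtype, ← Set.range_comp]
    exact congrArg Set.range (funext fun χ => (hP χ).symm)
  rw [Submodule.map_span, himage, ← Submodule.map_span] at hspan
  refine (Function.Injective.mem_set_image hmapC).1 ?_
  convert! hspan using 1
  exact (map_esymmPart (Int.castRingHom ℂ) μ).trans hV.symm

theorem linearIndependent_map_of_map_eq_frobeniusChar (K : Type*) [Field K]
    (hcard : Fintype.card α ≤ Fintype.card κ)
    (hP : ∀ χ, map (Int.castRingHom ℂ) (P χ) = frobeniusChar κ χ.1) :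
    LinearIndependent K fun χ => map (Int.castRingHom K) (P χ) := by
  have := Fintype.ofFinite {f : Equiv.Perm α → ℂ // IsIrrChar (Equiv.Perm α) f}
  refine linearIndependent_of_forall_mem_span (linearIndependent_esymmPart κ K hcard)
    (fun μ => ?_) card_irrChar_perm_le
  have hmem := Submodule.mem_map_of_mem (f := (map (Int.castRingHom K)).toIntAlgHom.toLinearMap)
    (esymmPart_mem_span hP μ)
  rw [Submodule.map_span, ← Set.range_comp] at hmem
  rw [← map_esymmPart (Int.castRingHom K)]
  exact Submodule.span_subset_span ℤ K _ hmem

end IntegralLift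

/-- the virtual characters `Ind_{S_w × S_w}^{S_{2w}} (χ ⊠ χ)`, for `χ`
ranging over the irreducible characters of `S_w`, are `ℤ`-linearly independent elements of
the group of virtual characters of `S_{2w}` (realized inside the class functions, where the
virtual characters form the `ℤ`-span of the irreducible characters). -/
theorem ind_diag_linearIndependent (w : ℕ) (hw : 0 < w) :
    (∀ χ : Equiv.Perm (Fin w) → ℂ, IsIrrChar (Equiv.Perm (Fin w)) χ →
      indHom (Equiv.Perm.sumCongrHom (Fin w) (Fin w)) (fun p => χ p.1 * χ p.2) ∈
        Submodule.span ℤ {f | IsIrrChar (Equiv.Perm (Fin w ⊕ Fin w)) f}) ∧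
    LinearIndependent ℤ
      (fun χ : {f : Equiv.Perm (Fin w) → ℂ // IsIrrChar (Equiv.Perm (Fin w)) f} =>
        indHom (Equiv.Perm.sumCongrHom (Fin w) (Fin w)) (fun p => χ.1 p.1 * χ.1 p.2)) := by
  refine ⟨fun χ hχ => hχ.indHom_mul_mem_span _ hχ, ?_⟩
  choose P hP using fun χ : {f : Equiv.Perm (Fin w) → ℂ // IsIrrChar (Equiv.Perm (Fin w)) f} =>
    χ.2.exists_map_eq_frobeniusChar (Fin w)
  have hmod_two : LinearIndependent (ZMod 2) fun χ =>
      MvPolynomial.map (Int.castRingHom (ZMod 2)) (P χ ^ 2) := by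
    simp only [map_pow]
    exact linearIndependent_pow_char 2
      (linearIndependent_map_of_map_eq_frobeniusChar (ZMod 2) le_rfl hP)
  have hint : LinearIndependent ℤ fun χ => P χ ^ 2 :=
    linearIndependent_int_of_zmod 2 (by decide)
      (MvPolynomial.map (Int.castRingHom (ZMod 2))).toAddMonoidHom hmod_two
  have hcomplex := hint.map' (MvPolynomial.map (Int.castRingHom ℂ)).toIntAlgHom.toLinearMap
    (LinearMap.ker_eq_bot.2 (MvPolynomial.map_injective _ Int.cast_injective))
  apply LinearIndependent.of_comp ((frobeniusChar (Fin w)).restrictScalars ℤ)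
  convert! hcomplex using 1
  ext1 χ
  simp only [Function.comp_apply, LinearMap.restrictScalars_apply, frobeniusChar_indHom, ← hP,
    ← sq]
  exact (map_pow _ _ _).symm
end
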